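/- Degree-3 modular differential equation for the Jacobi form ρ_{0,2}: with all heat operators taken with index m = 2, the weak Jacobi form ρ_{0,2} = 2·ψ_{0,2} − 11·φ_{0,2} satisfies H^{(2)}_{4}(H^{(2)}_{2}(H^{(2)}_{0}(ρ_{0,2})))(τ,z) − (335/4)·E₄(τ)·H^{(2)}_{0}(ρ_{0,2})(τ,z) − (275/4)·E₆(τ)·ρ_{0,2}(τ,z) = 0 for all (τ,z) ∈ ℍ × ℂ. -/

import Mathlib

/-!
Write `ϑ⁽ᵏ⁾` (`thk k`) for the `k`-th derivative of the theta series with respect to `2πi z`,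
`a = φ_{-2,1}` and `b = φ_{0,1}`. By definition `ρ_{0,2} = (17 E₄ a² - b²) / 8`, and the whole theorem is a
computation in the ring generated by `a`, `b`, `E₂`, `E₄`, `E₆` once the index-2 heat operator is
known there:

* `H(a²) = -3/2 a b - 9/2 E₂ a²`,
* `H(a b) = -1/4 b² - 13/4 E₄ a² - 5/2 E₂ a b`,
* `H(b²) = -7/2 E₄ a b - 2 E₆ a² - 1/2 E₂ b²`

(`heatOp_comb`), together with Ramanujan's formulas for the `τ`-derivatives of `E₂`, `E₄`, `E₆`
(`deriv_Eis2`, `deriv_Eis4`, `deriv_Eis6`). The latter hold because in each case the difference of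
the two sides is a level-one cusp form of weight less than 12.

The three heat identities follow from the heat equation of `ϑ` and from two polynomial relations
between the `ϑ⁽ᵏ⁾`, `E₂`, `E₄`, `E₆`, namely the vanishing of `jetQ` and `jetG` (`jetQ_thk`,
`jetG_thk`). Both come down to the two differential equations of the Weierstrass function, with `℘`
written through `ϑ` and denominators cleared (`jetQ` and `jetS`). These are proved on Taylor series
in `z` whose coefficients are holomorphic in `τ`. The heat equation and Ramanujan's formulas give
linear equations between `jetQ` and `jetS` by which the lowest coefficient `s` of
`jetS = s z^m + …`, where `m ≥ 4`, satisfies `(m - 2)(m - 3) s = 0`; see `jet_first`, `jet_second`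
and `formal_jets_eq_zero`. Entire functions are determined by their Taylor series, which transfers the result to all `z`.

The only initial condition needed is that the third `z`-derivative of `ϑ` at `0` is a fixed multiple
of `E₂` times the first one (`thk_three_zero`). The eighth power of `∂ϑ/∂z (τ, 0)` is a cusp form of
weight 12, hence a multiple of `η²⁴` (`exists_thk_one_pow`), whose logarithmic derivative is a
multiple of `E₂`.
-/

open Complex Real

noncomputable section

/-- The Jacobi theta series `ϑ(τ,z) = q^{1/8} ζ^{1/2} ∑_{n∈ℤ} (−1)^n q^{n(n+1)/2} ζ^n`
with `q = e^{2πiτ}`, `ζ = e^{2πiz}`. -/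
def thetaJ (τ z : ℂ) : ℂ :=
  Complex.exp (π * I * τ / 4) * Complex.exp (π * I * z) *
    ∑' n : ℤ, (-1 : ℂ) ^ n * Complex.exp (π * I * τ * n * (n + 1)) *
      Complex.exp (2 * π * I * z * n)

/-- The Dedekind eta function `η(τ) = q^{1/24} ∏_{n≥1} (1 − q^n)`. -/
def etaD (τ : ℂ) : ℂ :=
  Complex.exp (π * I * τ / 12) * ∏' n : ℕ, (1 - Complex.exp (2 * π * I * τ * (n + 1)))

/-- The divisor power sum `σ_k(n) = ∑_{d ∣ n} d^k`. -/
def sigmaD (k n : ℕ) : ℕ := ∑ d ∈ n.divisors, d ^ k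

/-- The quasi-modular Eisenstein series `E₂`. -/
def Eis2 (τ : ℂ) : ℂ :=
  1 - 24 * ∑' n : ℕ, (sigmaD 1 (n + 1) : ℂ) * Complex.exp (2 * π * I * τ * (n + 1))

/-- The Eisenstein series `E₄`. -/
def Eis4 (τ : ℂ) : ℂ :=
  1 + 240 * ∑' n : ℕ, (sigmaD 3 (n + 1) : ℂ) * Complex.exp (2 * π * I * τ * (n + 1))

/-- The Eisenstein series `E₆`. -/
def Eis6 (τ : ℂ) : ℂ :=
  1 - 504 * ∑' n : ℕ, (sigmaD 5 (n + 1) : ℂ) * Complex.exp (2 * π * I * τ * (n + 1))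

/-- The heat operator `H^{(m)}φ = (12/(2πi)) ∂φ/∂τ + (3/(4π²m)) ∂²φ/∂z²` of index `m`. -/
def heatOp (m : ℚ) (φ : ℂ → ℂ → ℂ) (τ z : ℂ) : ℂ :=
  12 / (2 * π * I) * deriv (fun t => φ t z) τ
    + 3 / (4 * π ^ 2 * (m : ℂ)) * deriv (deriv (φ τ)) z

/-- The modular heat operator `H^{(m)}_k φ = H^{(m)}φ − ((2k−1)/2)·E₂·φ`. -/
def heatMod (m k : ℚ) (φ : ℂ → ℂ → ℂ) (τ z : ℂ) : ℂ :=
  heatOp m φ τ z - (2 * (k : ℂ) - 1) / 2 * Eis2 τ * φ τ z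

/-- The weak Jacobi form `φ_{−2,1} = ϑ²/η⁶` of weight −2 and index 1. -/
def phim21 (τ z : ℂ) : ℂ := thetaJ τ z ^ 2 / etaD τ ^ 6

/-- The weak Jacobi form `φ_{0,1}` of weight 0 and index 1:
`φ_{0,1} = (3/π²)·(ϑ·∂²ϑ/∂z² − (∂ϑ/∂z)²)/η⁶ + E₂·ϑ²/η⁶`. -/
def phi01 (τ z : ℂ) : ℂ :=
  3 / (π : ℂ) ^ 2 *
      (thetaJ τ z * deriv (deriv (thetaJ τ)) z - (deriv (thetaJ τ) z) ^ 2) / etaD τ ^ 6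
    + Eis2 τ * thetaJ τ z ^ 2 / etaD τ ^ 6

/-- The weak Jacobi form `φ_{0,2} = (φ_{0,1}² − E₄·φ_{−2,1}²)/24` of weight 0 and index 2. -/
def phi02 (τ z : ℂ) : ℂ := (phi01 τ z ^ 2 - Eis4 τ * phim21 τ z ^ 2) / 24

/-- The weak Jacobi form `ψ_{0,2} = φ_{0,1}² − 20·φ_{0,2}` of weight 0 and index 2. -/
def psi02 (τ z : ℂ) : ℂ := phi01 τ z ^ 2 - 20 * phi02 τ z

/-- The weak Jacobi form `ρ_{0,2} = 2·ψ_{0,2} − 11·φ_{0,2}` of weight 0 and index 2. -/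
def rho02 (τ z : ℂ) : ℂ := 2 * psi02 τ z - 11 * phi02 τ z

/-! ### Theta series with polynomial weights -/

/-- The `n`-th term of `thk k`. -/
def thkTerm (k : ℕ) (n : ℤ) (τ z : ℂ) : ℂ :=
  (-1 : ℂ) ^ n * ((n : ℂ) + 1 / 2) ^ k *
    cexp (π * I * τ * ((n : ℂ) + 1 / 2) ^ 2 + 2 * π * I * z * ((n : ℂ) + 1 / 2))

/-- The theta series `∑ (-1)^n (n+1/2)^k q^{(n+1/2)²/2} ζ^{n+1/2}`, i.e. the `k`-th derivative of
`ϑ` with respect to `2πi z`. -/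
def thk (k : ℕ) (τ z : ℂ) : ℂ := ∑' n : ℤ, thkTerm k n τ z

/-- A summable majorant for the terms `thkTerm k n τ z` with `δ ≤ im τ` and `|im z| ≤ S`. -/
def thkBd (k : ℕ) (δ S : ℝ) (n : ℤ) : ℝ :=
  Real.exp (2 * π * S) * 2 ^ (k - 1) *
    ((|n| ^ k : ℝ) * Real.exp (-π * (δ * n ^ 2 - 2 * (δ / 2 + S) * |n|))
      + (|n| ^ 0 : ℝ) * Real.exp (-π * (δ * n ^ 2 - 2 * (δ / 2 + S) * |n|)))

lemma summable_thkBd (k : ℕ) {δ : ℝ} (hδ : 0 < δ) (S : ℝ) : Summable (thkBd k δ S) :=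
  ((summable_pow_mul_jacobiTheta₂_term_bound _ hδ k).add
    (summable_pow_mul_jacobiTheta₂_term_bound _ hδ 0)).mul_left _

lemma norm_thkTerm (k : ℕ) (n : ℤ) (τ z : ℂ) :
    ‖thkTerm k n τ z‖ = |(n : ℝ) + 1 / 2| ^ k *
      Real.exp (-π * τ.im * ((n : ℝ) + 1 / 2) ^ 2 - 2 * π * z.im * ((n : ℝ) + 1 / 2)) := by
  have h1 : ((n : ℂ) + 1 / 2) = (((n : ℝ) + 1 / 2 : ℝ) : ℂ) := by push_cast; ring
  rw [thkTerm, norm_mul, norm_mul, norm_zpow, norm_neg, norm_one, one_zpow, one_mul, norm_pow, h1,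
    Complex.norm_real, Real.norm_eq_abs, Complex.norm_exp]
  congr 2
  generalize (n : ℝ) + 1 / 2 = x
  have : (π * I * τ * (x : ℂ) ^ 2 + 2 * π * I * z * x)
     = ((π * x ^ 2 : ℝ) : ℂ) * (I * τ) + ((2 * π * x : ℝ) : ℂ) * (I * z) := by push_cast; ring
  rw [this, Complex.add_re, Complex.re_ofReal_mul, Complex.re_ofReal_mul]
  simp
  ring

lemma norm_thkTerm_le (k : ℕ) {δ S : ℝ} (hδ : 0 < δ) (n : ℤ) {τ z : ℂ} (hτ : δ ≤ τ.im)
    (hz : |z.im| ≤ S) : ‖thkTerm k n τ z‖ ≤ thkBd k δ S n := by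
  rw [norm_thkTerm]
  have hS : 0 ≤ S := (abs_nonneg _).trans hz
  have hx : |(n : ℝ) + 1 / 2| ≤ |(n : ℝ)| + 1 :=
    (abs_add_le _ _).trans (by rw [abs_of_pos (by norm_num : (0 : ℝ) < 1 / 2)]; linarith)
  have h1 : |(n : ℝ) + 1 / 2| ^ k ≤ 2 ^ (k - 1) * (|(n : ℝ)| ^ k + 1) := by
    refine (pow_le_pow_left₀ (abs_nonneg _) hx k).trans ?_
    simpa using add_pow_le (abs_nonneg (n : ℝ)) zero_le_one k
  have h2 : Real.exp (-π * τ.im * ((n : ℝ) + 1 / 2) ^ 2 - 2 * π * z.im * ((n : ℝ) + 1 / 2))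
      ≤ Real.exp (2 * π * S) * Real.exp (-π * (δ * n ^ 2 - 2 * (δ / 2 + S) * |(n : ℝ)|)) := by
    rw [← Real.exp_add]
    apply Real.exp_le_exp.mpr
    have e1 : -(z.im * ((n : ℝ) + 1 / 2)) ≤ S * (|(n : ℝ)| + 1) := by
      refine (neg_le_abs _).trans ?_
      rw [abs_mul]
      exact mul_le_mul hz hx (abs_nonneg _) hS
    have e2 : δ * ((n : ℝ) + 1 / 2) ^ 2 ≤ τ.im * ((n : ℝ) + 1 / 2) ^ 2 :=
      mul_le_mul_of_nonneg_right hτ (sq_nonneg _)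
    have e3 : δ * ((n : ℝ) ^ 2 - |(n : ℝ)|) ≤ δ * ((n : ℝ) + 1 / 2) ^ 2 := by
      apply mul_le_mul_of_nonneg_left _ hδ.le
      nlinarith [neg_abs_le (n : ℝ)]
    have e4 : -τ.im * ((n : ℝ) + 1 / 2) ^ 2 - 2 * (z.im * ((n : ℝ) + 1 / 2)) ≤
      2 * S - (δ * n ^ 2 - 2 * (δ / 2 + S) * |(n : ℝ)|) := by nlinarith
    nlinarith [mul_le_mul_of_nonneg_left e4 pi_pos.le]
  refine (mul_le_mul h1 h2 (Real.exp_pos _).le (by positivity)).trans (le_of_eq ?_)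
  simp only [thkBd, pow_zero]
  push_cast
  ring

lemma summable_thkTerm (k : ℕ) {τ : ℂ} (hτ : 0 < τ.im) (z : ℂ) :
    Summable fun n => thkTerm k n τ z :=
  .of_norm_bounded (summable_thkBd k hτ |z.im|) fun n => norm_thkTerm_le k hτ n le_rfl le_rfl

lemma hasDerivAt_thkTerm_z (k : ℕ) (n : ℤ) (τ z : ℂ) :
    HasDerivAt (fun z => thkTerm k n τ z) (2 * π * I * thkTerm (k + 1) n τ z) z := by
  have h : HasDerivAt (fun z : ℂ => π * I * τ * ((n : ℂ) + 1 / 2) ^ 2 + 2 * π * I * z *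
      ((n : ℂ) + 1 / 2)) (2 * π * I * ((n : ℂ) + 1 / 2)) z := by
    simpa using (((hasDerivAt_id z).const_mul (2 * π * I : ℂ)).mul_const
      ((n : ℂ) + 1 / 2)).const_add (π * I * τ * ((n : ℂ) + 1 / 2) ^ 2)
  refine (h.cexp.const_mul ((-1 : ℂ) ^ n * ((n : ℂ) + 1 / 2) ^ k)).congr_deriv ?_
  simp only [thkTerm]; ring

lemma hasDerivAt_thkTerm_tau (k : ℕ) (n : ℤ) (τ z : ℂ) :
    HasDerivAt (fun t => thkTerm k n t z) (π * I * thkTerm (k + 2) n τ z) τ := by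
  have h : HasDerivAt (fun t : ℂ => π * I * t * ((n : ℂ) + 1 / 2) ^ 2 + 2 * π * I * z *
      ((n : ℂ) + 1 / 2)) (π * I * ((n : ℂ) + 1 / 2) ^ 2) τ := by
    simpa using (((hasDerivAt_id τ).const_mul (π * I : ℂ)).mul_const
      (((n : ℂ) + 1 / 2) ^ 2)).add_const (2 * π * I * z * ((n : ℂ) + 1 / 2))
  refine (h.cexp.const_mul ((-1 : ℂ) ^ n * ((n : ℂ) + 1 / 2) ^ k)).congr_deriv ?_
  simp only [thkTerm]; ring

lemma hasDerivAt_thk_z (k : ℕ) {τ : ℂ} (hτ : 0 < τ.im) (z : ℂ) :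
    HasDerivAt (fun z => thk k τ z) (2 * π * I * thk (k + 1) τ z) z := by
  obtain ⟨S, hS⟩ := exists_gt |z.im|
  let t : Set ℂ := {u | -S < u.im} ∩ {u | u.im < S}
  have ht : IsOpen t := (isOpen_lt continuous_const continuous_im).inter
    (isOpen_lt continuous_im continuous_const)
  have hc : IsPreconnected t :=
    ((convex_halfSpace_im_gt _).inter (convex_halfSpace_im_lt _)).isPreconnected
  have hz : z ∈ t := abs_lt.mp hS
  have := hasDerivAt_tsum_of_isPreconnected (g := fun n z => thkTerm k n τ z)
    (g' := fun n z => 2 * π * I * thkTerm (k + 1) n τ z)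
    ((summable_thkBd (k + 1) hτ S).mul_left ‖(2 * π * I : ℂ)‖) ht hc
    (fun n y _ => hasDerivAt_thkTerm_z k n τ y)
    (fun n y hy => by
      rw [norm_mul]
      exact mul_le_mul_of_nonneg_left
        (norm_thkTerm_le _ hτ n le_rfl (abs_lt.mpr ⟨hy.1, hy.2⟩).le) (norm_nonneg _))
    hz (summable_thkTerm k hτ z) hz
  rwa [tsum_mul_left] at this

lemma hasDerivAt_thk_tau (k : ℕ) {τ : ℂ} (hτ : 0 < τ.im) (z : ℂ) :
    HasDerivAt (fun t => thk k t z) (π * I * thk (k + 2) τ z) τ := by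
  obtain ⟨δ, hδ, hδτ⟩ := exists_between hτ
  have ht : IsOpen {u : ℂ | δ < u.im} := isOpen_lt continuous_const continuous_im
  have := hasDerivAt_tsum_of_isPreconnected (g := fun n t => thkTerm k n t z)
    (g' := fun n t => π * I * thkTerm (k + 2) n t z)
    ((summable_thkBd (k + 2) hδ |z.im|).mul_left ‖(π * I : ℂ)‖) ht
    (convex_halfSpace_im_gt _).isPreconnected
    (fun n y _ => hasDerivAt_thkTerm_tau k n y z)
    (fun n y hy => by
      rw [norm_mul]
      exact mul_le_mul_of_nonneg_left
        (norm_thkTerm_le _ hδ n (le_of_lt hy) le_rfl) (norm_nonneg _))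
    hδτ (summable_thkTerm k hτ z) hδτ
  rwa [tsum_mul_left] at this

lemma thetaJ_eq_thk (τ z : ℂ) : thetaJ τ z = thk 0 τ z := by
  rw [thetaJ, thk, ← tsum_mul_left]
  refine tsum_congr fun n => ?_
  rw [thkTerm, pow_zero, mul_one]
  have : (π * I * τ * ((n : ℂ) + 1 / 2) ^ 2 + 2 * π * I * z * ((n : ℂ) + 1 / 2)) =
    (π * I * τ / 4) + (π * I * z) + (π * I * τ * n * (n + 1)) + (2 * π * I * z * n) := by ring
  rw [this, Complex.exp_add, Complex.exp_add, Complex.exp_add]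
  ring

lemma thk_neg (k : ℕ) (τ z : ℂ) : thk k τ (-z) = (-1) ^ (k + 1) * thk k τ z := by
  rw [thk, thk, ← tsum_mul_left, ← (Equiv.subLeft (-1 : ℤ)).tsum_eq]
  refine tsum_congr fun n => ?_
  simp only [Equiv.subLeft_apply, thkTerm]
  have e1 : (((-1 - n : ℤ) : ℂ) + 1 / 2) = -((n : ℂ) + 1 / 2) := by push_cast; ring
  have e2 : (-1 : ℂ) ^ (-1 - n : ℤ) = - (-1 : ℂ) ^ n := by
    rw [zpow_sub₀ (by norm_num), zpow_neg_one, inv_neg, inv_one]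
    rcases Int.even_or_odd n with h | h
    · simp [h.neg_one_zpow]
    · simp [h.neg_one_zpow]
  rw [e1, e2, neg_pow ((n : ℂ) + 1 / 2) k, pow_succ]
  ring_nf

/-- `ϑ` is odd in `z`, so its even derivatives vanish at `z = 0`. -/
lemma thk_even_zero {k : ℕ} (hk : Even k) (τ : ℂ) : thk k τ 0 = 0 := by
  have := thk_neg k τ 0
  rw [neg_zero, pow_succ, hk.neg_one_pow] at this
  linear_combination this / 2

/-! ### Level one cusp forms from functions on `ℂ` -/

open UpperHalfPlane hiding I
open ModularForm Filter Topology
open scoped MatrixGroups Manifold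

/-- The filter `im τ → ∞` on `ℂ`. -/
def imInfty : Filter ℂ := Filter.comap Complex.im Filter.atTop

lemma imInfty_eventually_im_gt (c : ℝ) : ∀ᶠ τ in imInfty, c < τ.im :=
  Filter.preimage_mem_comap (Ioi_mem_atTop c)

lemma tendsto_coe_imInfty : Tendsto (fun τ : ℍ => (τ : ℂ)) atImInfty imInfty := by
  rw [imInfty, tendsto_comap_iff]
  exact tendsto_comap

instance : imInfty.NeBot := tendsto_coe_imInfty.neBot

/-- A holomorphic function on the upper half plane with the transformation behaviour of weight `k`
under `τ ↦ τ + 1` and `τ ↦ -1/τ` and the limit `0` at `i∞` is a level one cusp form. -/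
lemma exists_cuspForm (k : ℕ) (f : ℂ → ℂ) (hd : ∀ τ : ℂ, 0 < τ.im → DifferentiableAt ℂ f τ)
    (hT : ∀ τ : ℂ, 0 < τ.im → f (τ + 1) = f τ)
    (hS : ∀ τ : ℂ, 0 < τ.im → f (-1 / τ) = τ ^ k * f τ) (h0 : Tendsto f imInfty (𝓝 0)) :
    ∃ F : CuspForm 𝒮ℒ k, ∀ τ : ℍ, F τ = f τ := by
  have hS' : ((fun τ : ℍ => f τ) ∣[(k : ℤ)] ModularGroup.S) = fun τ : ℍ => f τ := by
    ext z
    suffices f (-(↑z)⁻¹) * ((z : ℂ) ^ k)⁻¹ = f z by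
      rw [SL_slash_apply, UpperHalfPlane.modular_S_smul, ModularGroup.denom_S]
      simpa
    have := hS z z.2
    rw [neg_div, one_div] at this
    rw [this]
    field_simp [z.ne_zero]
  have hT' : ((fun τ : ℍ => f τ) ∣[(k : ℤ)] ModularGroup.T) = fun τ : ℍ => f τ := by
    ext z
    have hdn : denom ModularGroup.T z = 1 := by
      rw [ModularGroup.denom_apply]
      simp [ModularGroup.T]
    rw [SL_slash_apply, modular_T_smul, hdn]
    have := hT z z.2
    simp [add_comm (1 : ℂ), this]
  refine ⟨{ toFun := fun τ : ℍ => f τ, slash_action_eq' := ?_, holo' := ?_, zero_at_cusps' := ?_ },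
    fun τ => rfl⟩
  · intro A hA
    obtain ⟨A, rfl⟩ := hA
    exact SlashInvariantForm.slash_action_generators_SL2Z hS' hT' A
  · rw [UpperHalfPlane.mdifferentiable_iff]
    refine .congr (fun z hz ↦ (hd z hz).differentiableWithinAt) fun z hz ↦ ?_
    simp [ofComplex_apply_of_im_pos hz]
  · intro c hc
    rw [Subgroup.IsArithmetic.isCusp_iff_isCusp_SL2Z] at hc
    rw [OnePoint.isZeroAt_iff_forall_SL2Z hc]
    intro γ _
    rw [SlashInvariantForm.slash_action_generators_SL2Z hS' hT']
    exact h0.comp tendsto_coe_imInfty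

lemma eq_zero_of_weight_lt_twelve (k : ℕ) (hk : k < 12) (f : ℂ → ℂ)
    (hd : ∀ τ : ℂ, 0 < τ.im → DifferentiableAt ℂ f τ)
    (hT : ∀ τ : ℂ, 0 < τ.im → f (τ + 1) = f τ)
    (hS : ∀ τ : ℂ, 0 < τ.im → f (-1 / τ) = τ ^ k * f τ) (h0 : Tendsto f imInfty (𝓝 0))
    (τ : ℂ) (hτ : 0 < τ.im) : f τ = 0 := by
  obtain ⟨F, hF⟩ := exists_cuspForm k f hd hT hS h0
  have hr := CuspForm.rank_eq_zero_of_weight_lt_twelve (k := k) (by exact_mod_cast hk)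
  have := rank_zero_iff_forall_zero.mp hr F
  have h2 := hF ⟨τ, hτ⟩
  rw [this] at h2
  simpa using h2.symm

/-! ### The Eisenstein series -/

lemma Eis2_eq (τ : ℍ) : Eis2 τ = EisensteinSeries.E2 τ := by
  rw [EisensteinSeries.E2_eq_tsum_cexp, Eis2,
    tsum_pnat_eq_tsum_succ (f := fun n => (ArithmeticFunction.sigma 1 n : ℂ) * cexp (2 * π * I * τ) ^ n)]
  congr 2
  refine tsum_congr fun n => ?_
  rw [← Complex.exp_nat_mul, sigmaD, ArithmeticFunction.sigma_apply]
  congr 2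
  push_cast; ring

lemma Eis4_eq (τ : ℍ) : Eis4 τ = E (k := 4) (by norm_num) τ := by
  rw [EisensteinSeries.q_expansion_bernoulli (k := 4) _ ⟨2, rfl⟩, Eis4]
  simp only [Nat.reduceSub, zpow_natCast]
  rw [tsum_pnat_eq_tsum_succ (f := fun n => (ArithmeticFunction.sigma 3 n : ℂ) * cexp (2 * π * I * τ) ^ n),
    show bernoulli 4 = -1 / 30 by decide +kernel]
  have : ∀ n : ℕ, (sigmaD 3 (n + 1) : ℂ) * cexp (2 * π * I * τ * (n + 1)) =
      (ArithmeticFunction.sigma 3 (n + 1) : ℂ) * cexp (2 * π * I * τ) ^ (n + 1) := fun n => by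
    rw [← Complex.exp_nat_mul, sigmaD, ArithmeticFunction.sigma_apply]
    congr 2
    push_cast; ring
  rw [tsum_congr this]
  push_cast
  ring

lemma Eis6_eq (τ : ℍ) : Eis6 τ = E (k := 6) (by norm_num) τ := by
  rw [EisensteinSeries.q_expansion_bernoulli (k := 6) _ ⟨3, rfl⟩, Eis6]
  simp only [Nat.reduceSub, zpow_natCast]
  rw [tsum_pnat_eq_tsum_succ (f := fun n => (ArithmeticFunction.sigma 5 n : ℂ) * cexp (2 * π * I * τ) ^ n),
    show bernoulli 6 = 1 / 42 by decide +kernel]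
  have : ∀ n : ℕ, (sigmaD 5 (n + 1) : ℂ) * cexp (2 * π * I * τ * (n + 1)) =
      (ArithmeticFunction.sigma 5 (n + 1) : ℂ) * cexp (2 * π * I * τ) ^ (n + 1) := fun n => by
    rw [← Complex.exp_nat_mul, sigmaD, ArithmeticFunction.sigma_apply]
    congr 2
    push_cast; ring
  rw [tsum_congr this]
  push_cast
  ring

lemma etaD_eq (τ : ℂ) : etaD τ = ModularForm.eta τ := by
  rw [etaD, ModularForm.eta, Function.Periodic.qParam]
  congr 1
  · congr 1
    push_cast; ring
  · refine tprod_congr fun n => ?_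
    rw [ModularForm.eta_q_eq_cexp]
    congr 2; ring

/-- A function on `ℂ` agreeing on `ℍ` with a holomorphic function is complex differentiable. -/
lemma differentiableAt_of_mdiff {f : ℂ → ℂ} {F : ℍ → ℂ} (hF : MDiff F)
    (h : ∀ τ : ℍ, f τ = F τ) {τ : ℂ} (hτ : 0 < τ.im) : DifferentiableAt ℂ f τ := by
  rw [UpperHalfPlane.mdifferentiable_iff] at hF
  have := (hF τ hτ).differentiableAt (isOpen_upperHalfPlaneSet.mem_nhds hτ)
  refine this.congr_of_eventuallyEq ?_
  filter_upwards [isOpen_upperHalfPlaneSet.mem_nhds hτ] with z hz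
  simp [ofComplex_apply_of_im_pos hz, ← h]

lemma differentiableAt_Eis2 {τ : ℂ} (hτ : 0 < τ.im) : DifferentiableAt ℂ Eis2 τ :=
  differentiableAt_of_mdiff E2_mdifferentiable Eis2_eq hτ

lemma differentiableAt_Eis4 {τ : ℂ} (hτ : 0 < τ.im) : DifferentiableAt ℂ Eis4 τ :=
  differentiableAt_of_mdiff (ModularFormClass.holo _) Eis4_eq hτ

lemma differentiableAt_Eis6 {τ : ℂ} (hτ : 0 < τ.im) : DifferentiableAt ℂ Eis6 τ :=
  differentiableAt_of_mdiff (ModularFormClass.holo _) Eis6_eq hτ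

lemma cexp_period (τ : ℂ) (n : ℕ) :
    cexp (2 * π * I * (τ + 1) * (n + 1)) = cexp (2 * π * I * τ * (n + 1)) := by
  rw [Complex.exp_eq_exp_iff_exists_int]
  exact ⟨n + 1, by push_cast; ring⟩

lemma Eis2_add_one (τ : ℂ) : Eis2 (τ + 1) = Eis2 τ := by simp only [Eis2, cexp_period]
lemma Eis4_add_one (τ : ℂ) : Eis4 (τ + 1) = Eis4 τ := by simp only [Eis4, cexp_period]
lemma Eis6_add_one (τ : ℂ) : Eis6 (τ + 1) = Eis6 τ := by simp only [Eis6, cexp_period]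

lemma im_neg_inv_pos {τ : ℂ} (hτ : 0 < τ.im) : 0 < (-1 / τ).im := by
  have := (ModularGroup.S • (⟨τ, hτ⟩ : ℍ)).im_pos
  rw [UpperHalfPlane.modular_S_smul] at this
  simpa [neg_div] using this

lemma Eis2_S {τ : ℂ} (hτ : 0 < τ.im) :
    Eis2 (-1 / τ) = τ ^ 2 * Eis2 τ + 6 * τ / (π * I) := by
  have h := EisensteinSeries.G2_S_transform ⟨τ, hτ⟩
  have e1 := Eis2_eq ⟨τ, hτ⟩
  have e2 := Eis2_eq (ModularGroup.S • ⟨τ, hτ⟩)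
  have e3 : ((ModularGroup.S • (⟨τ, hτ⟩ : ℍ) : ℍ) : ℂ) = -1 / τ := by
    rw [UpperHalfPlane.modular_S_smul]; simp [neg_div]
  rw [e3] at e2
  change Eis2 τ = _ at e1
  have hτ0 : τ ≠ 0 := by rintro rfl; simp at hτ
  rw [e1, e2]
  simp only [EisensteinSeries.E2, Pi.smul_apply, smul_eq_mul, riemannZeta_two]
  change _ = (τ ^ 2)⁻¹ * _ - -2 * π * I / τ at h
  rw [h]
  have : (π : ℂ) ≠ 0 := by exact_mod_cast pi_ne_zero
  field_simp
  ring_nf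
  rw [I_sq]
  ring

lemma modularForm_S {k : ℕ} (F : ModularForm 𝒮ℒ k) (f : ℂ → ℂ) (h : ∀ τ : ℍ, f τ = F τ) {τ : ℂ}
    (hτ : 0 < τ.im) : f (-1 / τ) = τ ^ k * f τ := by
  have h1 : ((F : ℍ → ℂ) ∣[(k : ℤ)] ModularGroup.S) = F :=
    F.slash_action_eq' _ ⟨ModularGroup.S, rfl⟩
  have h2 := congrFun h1 ⟨τ, hτ⟩
  have e3 : ((ModularGroup.S • (⟨τ, hτ⟩ : ℍ) : ℍ) : ℂ) = -1 / τ := by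
    rw [UpperHalfPlane.modular_S_smul]; simp [neg_div]
  have hτ0 : τ ≠ 0 := by rintro rfl; simp at hτ
  rw [SL_slash_apply, ModularGroup.denom_S, ← h, ← h, e3] at h2
  change _ * τ ^ (-(k : ℤ)) = f τ at h2
  rw [← h2, zpow_neg, zpow_natCast]
  field_simp

lemma Eis4_S {τ : ℂ} (hτ : 0 < τ.im) : Eis4 (-1 / τ) = τ ^ 4 * Eis4 τ :=
  modularForm_S _ _ Eis4_eq hτ

lemma Eis6_S {τ : ℂ} (hτ : 0 < τ.im) : Eis6 (-1 / τ) = τ ^ 6 * Eis6 τ :=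
  modularForm_S _ _ Eis6_eq hτ

/-! ### Ramanujan's differential equations -/

lemma norm_cexp_q (τ : ℂ) (n : ℕ) :
    ‖cexp (2 * π * I * τ * (n + 1))‖ = Real.exp (-(2 * π * τ.im)) ^ (n + 1) := by
  rw [Complex.norm_exp, ← Real.exp_nat_mul]
  congr 1
  have : (2 * π * I * τ * (n + 1) : ℂ) = ((2 * π * (n + 1) : ℝ) : ℂ) * (I * τ) := by push_cast; ring
  rw [this, Complex.re_ofReal_mul]
  simp
  ring

lemma tendsto_qSeries (k : ℕ) :
    Tendsto (fun τ : ℂ => ∑' n : ℕ, (sigmaD k (n + 1) : ℂ) * cexp (2 * π * I * τ * (n + 1)))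
      imInfty (𝓝 0) := by
  have hs : Summable fun n : ℕ => (sigmaD k (n + 1) : ℝ) * Real.exp (-(2 * π)) ^ (n + 1) := by
    have h1 : Summable fun n : ℕ => ((n : ℝ) ^ (k + 1)) * Real.exp (-(2 * π)) ^ n :=
      summable_pow_mul_geometric_of_norm_lt_one _
        (by rw [Real.norm_eq_abs, abs_of_pos (Real.exp_pos _), Real.exp_lt_one_iff]; linarith [pi_pos])
    refine ((summable_nat_add_iff 1).mpr h1).of_nonneg_of_le (fun n => by positivity) fun n => ?_
    refine mul_le_mul_of_nonneg_right ?_ (by positivity)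
    have := ArithmeticFunction.sigma_le_pow_succ k (n + 1)
    rw [ArithmeticFunction.sigma_apply] at this
    exact_mod_cast this
  have := tendsto_tsum_of_dominated_convergence (𝓕 := imInfty) (β := ℕ) (g := fun _ => (0 : ℂ))
    (f := fun τ n => (sigmaD k (n + 1) : ℂ) * cexp (2 * π * I * τ * (n + 1))) hs ?_ ?_
  · simpa using this
  · intro n
    rw [tendsto_zero_iff_norm_tendsto_zero]
    simp only [norm_mul, norm_cexp_q]
    have h2 : Tendsto (fun τ : ℂ => Real.exp (-(2 * π * τ.im))) imInfty (𝓝 0) := by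
      refine Real.tendsto_exp_neg_atTop_nhds_zero.comp ?_
      exact tendsto_comap.const_mul_atTop (by positivity)
    simpa using (h2.pow (n + 1)).const_mul ‖(sigmaD k (n + 1) : ℂ)‖
  · filter_upwards [imInfty_eventually_im_gt 1] with τ hτ n
    rw [norm_mul, norm_cexp_q, Complex.norm_natCast]
    refine mul_le_mul_of_nonneg_left ?_ (by positivity)
    refine pow_le_pow_left₀ (Real.exp_pos _).le (Real.exp_le_exp.mpr ?_) _
    nlinarith [pi_pos]

lemma tendsto_Eis2 : Tendsto Eis2 imInfty (𝓝 1) := by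
  simpa using! ((tendsto_qSeries 1).const_mul 24).const_sub 1
lemma tendsto_Eis4 : Tendsto Eis4 imInfty (𝓝 1) := by
  simpa using! ((tendsto_qSeries 3).const_mul 240).const_add 1
lemma tendsto_Eis6 : Tendsto Eis6 imInfty (𝓝 1) := by
  simpa using! ((tendsto_qSeries 5).const_mul 504).const_sub 1

/-- By Cauchy's estimate on discs of radius `1`, the derivative of a holomorphic function having a
limit at `i∞` tends to `0` there. -/
lemma tendsto_deriv_zero {f : ℂ → ℂ} {c : ℂ} (hd : ∀ τ : ℂ, 0 < τ.im → DifferentiableAt ℂ f τ)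
    (h : Tendsto f imInfty (𝓝 c)) : Tendsto (deriv f) imInfty (𝓝 0) := by
  rw [Metric.tendsto_nhds] at h ⊢
  intro ε hε
  have h1 := h (ε / 2) (by positivity)
  obtain ⟨s, hs, hs'⟩ := Filter.mem_comap.mp h1
  obtain ⟨A, hA⟩ := Filter.mem_atTop_sets.mp hs
  filter_upwards [imInfty_eventually_im_gt (max A 0 + 1)] with τ hτ
  have him : ∀ z ∈ Metric.closedBall τ 1, max A 0 < z.im := fun z hz => by
    have := (Complex.abs_im_le_norm (z - τ)).trans (mem_closedBall_iff_norm.mp hz)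
    rw [Complex.sub_im] at this
    linarith [neg_le_of_abs_le this]
  have hdf : DiffContOnCl ℂ (fun z => f z - c) (Metric.ball τ 1) := by
    apply DifferentiableOn.diffContOnCl
    rw [closure_ball _ one_ne_zero]
    intro z hz
    exact ((hd z ((le_max_right _ _).trans_lt (him z hz))).sub_const c).differentiableWithinAt
  have := Complex.norm_deriv_le_of_forall_mem_sphere_norm_le (f := fun z => f z - c) (c := τ)
    (C := ε / 2) one_pos hdf fun z hz => by
      have hz' := him z (Metric.sphere_subset_closedBall hz)
      have : dist (f z) c < ε / 2 := hs' (hA _ ((le_max_left _ _).trans hz'.le))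
      rw [← dist_eq_norm]; exact this.le
  rw [deriv_sub_const] at this
  rw [dist_zero_right]
  linarith

/-- Differentiating `f(-1/τ) = g(τ)`. -/
lemma deriv_S {f g : ℂ → ℂ} (hd : ∀ τ : ℂ, 0 < τ.im → DifferentiableAt ℂ f τ)
    (h : ∀ τ : ℂ, 0 < τ.im → f (-1 / τ) = g τ) {τ : ℂ} (hτ : 0 < τ.im) :
    deriv f (-1 / τ) = τ ^ 2 * deriv g τ := by
  have hτ0 : τ ≠ 0 := by rintro rfl; simp at hτ
  have h1 : HasDerivAt (fun t : ℂ => -1 / t) (1 / τ ^ 2) τ := by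
    refine ((hasDerivAt_const τ (-1 : ℂ)).div (hasDerivAt_id τ) hτ0).congr_deriv ?_
    simp
  have h2 := (hd _ (im_neg_inv_pos hτ)).hasDerivAt.comp τ h1
  have h3 : deriv g τ = deriv f (-1 / τ) * (1 / τ ^ 2) := by
    rw [← h2.deriv]
    apply Filter.EventuallyEq.deriv_eq
    filter_upwards [isOpen_upperHalfPlaneSet.mem_nhds hτ] with z hz
    exact (h z hz).symm
  rw [h3]
  field_simp

lemma deriv_add_one {f : ℂ → ℂ} (h : ∀ τ, f (τ + 1) = f τ) (τ : ℂ) :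
    deriv f (τ + 1) = deriv f τ := by
  rw [← deriv_comp_add_const, funext h]

lemma differentiableAt_deriv {f : ℂ → ℂ} (hd : ∀ τ : ℂ, 0 < τ.im → DifferentiableAt ℂ f τ)
    {τ : ℂ} (hτ : 0 < τ.im) : DifferentiableAt ℂ (deriv f) τ := by
  have : DifferentiableOn ℂ f {z : ℂ | 0 < z.im} := fun z hz => (hd z hz).differentiableWithinAt
  exact ((this.deriv isOpen_upperHalfPlaneSet) τ hτ).differentiableAt
    (isOpen_upperHalfPlaneSet.mem_nhds hτ)

lemma deriv_Eis2 {τ : ℂ} (hτ : 0 < τ.im) :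
    deriv Eis2 τ = 2 * π * I * ((Eis2 τ ^ 2 - Eis4 τ) / 12) := by
  have hpi : (π * I : ℂ) ≠ 0 := mul_ne_zero (by exact_mod_cast pi_ne_zero) I_ne_zero
  have := eq_zero_of_weight_lt_twelve 4 (by norm_num)
    (fun τ => 6 * (deriv Eis2 τ / (π * I)) - Eis2 τ ^ 2 + Eis4 τ)
    (fun τ h => ((((differentiableAt_deriv (fun _ => differentiableAt_Eis2) h).div_const _).const_mul
      _).sub ((differentiableAt_Eis2 h).pow 2)).add (differentiableAt_Eis4 h))
    (fun τ _ => by simp only [deriv_add_one Eis2_add_one, Eis2_add_one, Eis4_add_one])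
    (fun τ h => by
      have hτ0 : τ ≠ 0 := by rintro rfl; simp at h
      have hg : HasDerivAt (fun t : ℂ => t ^ 2 * Eis2 t + 6 * t / (π * I))
        (2 * τ * Eis2 τ + τ ^ 2 * deriv Eis2 τ + 6 / (π * I)) τ := by
        refine (((hasDerivAt_pow 2 τ).mul (differentiableAt_Eis2 h).hasDerivAt).add
          (((hasDerivAt_id τ).const_mul 6).div_const (π * I : ℂ))).congr_deriv ?_
        simp
      rw [deriv_S (fun _ => differentiableAt_Eis2) (fun _ => Eis2_S) h, hg.deriv, Eis2_S h, Eis4_S h]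
      field_simp
      ring)
    (by
      have := ((((tendsto_deriv_zero (fun _ => differentiableAt_Eis2) tendsto_Eis2).div_const
        (π * I : ℂ)).const_mul 6).sub (tendsto_Eis2.pow 2)).add tendsto_Eis4
      simpa using this) τ hτ
  field_simp at this
  linear_combination this / 6

lemma deriv_Eis4 {τ : ℂ} (hτ : 0 < τ.im) :
    deriv Eis4 τ = 2 * π * I * ((Eis2 τ * Eis4 τ - Eis6 τ) / 3) := by
  have hpi : (π * I : ℂ) ≠ 0 := mul_ne_zero (by exact_mod_cast pi_ne_zero) I_ne_zero
  have := eq_zero_of_weight_lt_twelve 6 (by norm_num)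
    (fun τ => 3 / 2 * (deriv Eis4 τ / (π * I)) - Eis2 τ * Eis4 τ + Eis6 τ)
    (fun τ h => ((((differentiableAt_deriv (fun _ => differentiableAt_Eis4) h).div_const _).const_mul
      _).sub ((differentiableAt_Eis2 h).mul (differentiableAt_Eis4 h))).add
      (differentiableAt_Eis6 h))
    (fun τ _ => by
      simp only [deriv_add_one Eis4_add_one, Eis2_add_one, Eis4_add_one, Eis6_add_one])
    (fun τ h => by
      have hτ0 : τ ≠ 0 := by rintro rfl; simp at h
      have hg : HasDerivAt (fun t : ℂ => t ^ 4 * Eis4 t)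
        (4 * τ ^ 3 * Eis4 τ + τ ^ 4 * deriv Eis4 τ) τ := by
        refine ((hasDerivAt_pow 4 τ).mul (differentiableAt_Eis4 h).hasDerivAt).congr_deriv ?_
        simp
      rw [deriv_S (fun _ => differentiableAt_Eis4) (fun _ => Eis4_S) h, hg.deriv, Eis2_S h, Eis4_S h,
        Eis6_S h]
      field_simp
      ring)
    (by
      have := ((((tendsto_deriv_zero (fun _ => differentiableAt_Eis4) tendsto_Eis4).div_const
        (π * I : ℂ)).const_mul (3 / 2)).sub (tendsto_Eis2.mul tendsto_Eis4)).add tendsto_Eis6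
      simpa using this) τ hτ
  field_simp at this
  linear_combination this / 3

lemma deriv_Eis6 {τ : ℂ} (hτ : 0 < τ.im) :
    deriv Eis6 τ = 2 * π * I * ((Eis2 τ * Eis6 τ - Eis4 τ ^ 2) / 2) := by
  have hpi : (π * I : ℂ) ≠ 0 := mul_ne_zero (by exact_mod_cast pi_ne_zero) I_ne_zero
  have := eq_zero_of_weight_lt_twelve 8 (by norm_num)
    (fun τ => deriv Eis6 τ / (π * I) - Eis2 τ * Eis6 τ + Eis4 τ ^ 2)
    (fun τ h => (((differentiableAt_deriv (fun _ => differentiableAt_Eis6) h).div_const _).sub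
      ((differentiableAt_Eis2 h).mul (differentiableAt_Eis6 h))).add
      ((differentiableAt_Eis4 h).pow 2))
    (fun τ _ => by
      simp only [deriv_add_one Eis6_add_one, Eis2_add_one, Eis4_add_one, Eis6_add_one])
    (fun τ h => by
      have hτ0 : τ ≠ 0 := by rintro rfl; simp at h
      have hg : HasDerivAt (fun t : ℂ => t ^ 6 * Eis6 t)
        (6 * τ ^ 5 * Eis6 τ + τ ^ 6 * deriv Eis6 τ) τ := by
        refine ((hasDerivAt_pow 6 τ).mul (differentiableAt_Eis6 h).hasDerivAt).congr_deriv ?_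
        simp
      rw [deriv_S (fun _ => differentiableAt_Eis6) (fun _ => Eis6_S) h, hg.deriv, Eis2_S h, Eis4_S h,
        Eis6_S h]
      field_simp
      ring)
    (by
      have := (((tendsto_deriv_zero (fun _ => differentiableAt_Eis6) tendsto_Eis6).div_const
        (π * I : ℂ)).sub (tendsto_Eis2.mul tendsto_Eis6)).add (tendsto_Eis4.pow 2)
      simpa using this) τ hτ
  field_simp at this
  linear_combination this

lemma hasDerivAt_etaD {τ : ℂ} (hτ : 0 < τ.im) :
    HasDerivAt etaD (2 * π * I * (Eis2 τ / 24 * etaD τ)) τ := by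
  have h1 := (differentiableAt_eta_of_mem_upperHalfPlaneSet hτ).hasDerivAt
  have h2 := logDeriv_eta_eq_E2 ⟨τ, hτ⟩
  have h3 := eta_ne_zero hτ
  rw [← Eis2_eq] at h2
  change logDeriv _ τ = _ * Eis2 τ at h2
  rw [logDeriv_apply, div_eq_iff h3] at h2
  rw [funext etaD_eq]
  refine h1.congr_deriv ?_
  rw [h2]; ring

lemma etaD_ne_zero {τ : ℂ} (hτ : 0 < τ.im) : etaD τ ≠ 0 := by
  rw [etaD_eq]; exact eta_ne_zero hτ

/-! ### The logarithmic derivative of `∂ϑ/∂z` at `z = 0` -/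

lemma cexp_pi_mul_int (n : ℤ) : cexp (π * I * n) = (-1) ^ n := by
  rw [mul_comm, Complex.exp_int_mul, Complex.exp_pi_mul_I]

lemma thkTerm_zero_eq (n : ℤ) (τ z : ℂ) : thkTerm 0 n τ z =
    cexp (π * I * τ / 4 + π * I * z) * jacobiTheta₂_term n (z + (τ + 1) / 2) τ := by
  rw [thkTerm, jacobiTheta₂_term, ← Complex.exp_add, ← cexp_pi_mul_int, pow_zero, mul_one,
    ← Complex.exp_add]
  congr 1
  ring

lemma thk_zero_eq (τ z : ℂ) :
    thk 0 τ z = cexp (π * I * τ / 4 + π * I * z) * jacobiTheta₂ (z + (τ + 1) / 2) τ := by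
  rw [thk, jacobiTheta₂, ← tsum_mul_left]
  exact tsum_congr fun n => thkTerm_zero_eq n τ z

lemma jacobiTheta₂_half (τ : ℂ) : jacobiTheta₂ ((τ + 1) / 2) τ = 0 := by
  have h := thk_zero_eq τ 0
  rw [thk_even_zero (by decide), zero_add] at h
  exact (mul_eq_zero.mp h.symm).resolve_left (Complex.exp_ne_zero _)

lemma thk_one_eq {τ : ℂ} (hτ : 0 < τ.im) : 2 * π * I * thk 1 τ 0 =
    cexp (π * I * τ / 4) * jacobiTheta₂' ((τ + 1) / 2) τ := by
  have h1 := hasDerivAt_thk_z 0 hτ 0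
  have h2 : HasDerivAt (fun z => jacobiTheta₂ (z + (τ + 1) / 2) τ)
      (jacobiTheta₂' (0 + (τ + 1) / 2) τ) 0 :=
    (hasDerivAt_jacobiTheta₂_fst (0 + (τ + 1) / 2) hτ).comp_add_const 0 ((τ + 1) / 2)
  have h3 : HasDerivAt (fun z : ℂ => cexp (π * I * τ / 4 + π * I * z))
      (cexp (π * I * τ / 4 + π * I * 0) * (π * I)) 0 := by
    refine HasDerivAt.cexp ?_
    simpa using ((hasDerivAt_id (0 : ℂ)).const_mul (π * I : ℂ)).const_add (π * I * τ / 4)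
  have h4 := h3.mul h2
  rw [funext (thk_zero_eq τ)] at h1
  have := h1.unique h4
  simpa [jacobiTheta₂_half] using this

lemma thk_one_add_one (τ : ℂ) : thk 1 (τ + 1) 0 = cexp (π * I / 4) * thk 1 τ 0 := by
  rw [thk, thk, ← tsum_mul_left]
  refine tsum_congr fun n => ?_
  obtain ⟨m, hm⟩ := Int.even_mul_succ_self n
  have hm' : (n : ℂ) * (n + 1) = m + m := by exact_mod_cast hm
  simp only [thkTerm]
  have : (π * I * (τ + 1) * ((n : ℂ) + 1 / 2) ^ 2 + 2 * π * I * 0 * ((n : ℂ) + 1 / 2)) =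
      π * I / 4 + (π * I * τ * ((n : ℂ) + 1 / 2) ^ 2 + 2 * π * I * 0 * ((n : ℂ) + 1 / 2)) +
      m * (2 * π * I) := by
    linear_combination (π * I) * hm'
  rw [this, Complex.exp_add, Complex.exp_add, Complex.exp_int_mul_two_pi_mul_I]
  ring

lemma thk_one_S {τ : ℂ} (hτ : 0 < τ.im) :
    thk 1 (-1 / τ) 0 = -I * τ * (-I * τ) ^ (1 / 2 : ℂ) * thk 1 τ 0 := by
  have hτ0 : τ ≠ 0 := by rintro rfl; simp at hτ
  have hpi : (π : ℂ) ≠ 0 := by exact_mod_cast pi_ne_zero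
  have e1 := thk_one_eq hτ
  have e2 := thk_one_eq (im_neg_inv_pos hτ)
  have hz : (τ + 1) / 2 / τ = -((-1 / τ + 1) / 2) + 1 := by field_simp; ring
  have h := jacobiTheta₂'_functional_equation ((τ + 1) / 2) τ
  rw [hz, jacobiTheta₂'_add_left, jacobiTheta₂'_neg_left, jacobiTheta₂_add_left,
    jacobiTheta₂_neg_left, jacobiTheta₂_half, mul_zero, sub_zero] at h
  have hs : (-I * τ) ^ (1 / 2 : ℂ) ≠ 0 := by simp [Complex.cpow_eq_zero_iff, hτ0]
  generalize (-I * τ) ^ (1 / 2 : ℂ) = s at h hs ⊢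
  have hexp : cexp (π * I * τ / 4) * cexp (-π * I * ((τ + 1) / 2) ^ 2 / τ) =
      -I * cexp (π * I * (-1 / τ) / 4) := by
    have h0 : cexp (-(π / 2 * I)) = -I := by
      rw [Complex.exp_neg, Complex.exp_pi_div_two_mul_I, Complex.inv_I]
    rw [← h0, ← Complex.exp_add, ← Complex.exp_add]
    congr 1
    field_simp
    ring
  have hc : (2 * π * I : ℂ) ≠ 0 := by simp [hpi]
  apply mul_left_cancel₀ hc
  rw [e2]
  have : 2 * π * I * (-I * τ * s * thk 1 τ 0) = -I * τ * s * (2 * π * I * thk 1 τ 0) := by ring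
  rw [this, e1, h]
  have : ∀ J : ℂ, -I * τ * s * (cexp (π * I * τ / 4) *
      (1 / s * cexp (-π * I * ((τ + 1) / 2) ^ 2 / τ) / τ * -J)) =
      I * (cexp (π * I * τ / 4) * cexp (-π * I * ((τ + 1) / 2) ^ 2 / τ)) * J := by
    intro J; field_simp
  rw [this, hexp]
  linear_combination ((cexp (π * I * (-1 / τ) / 4) *
    jacobiTheta₂' ((-1 / τ + 1) / 2) (-1 / τ))) * I_sq

/-- `∑ (-1)^n (n+1/2) q^{(n+1/2)²/2}` is asymptotic to its leading term `q^{1/8}`. -/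
lemma tendsto_thk_one : Tendsto (fun τ => cexp (-(π * I * τ / 4)) * thk 1 τ 0) imInfty (𝓝 1) := by
  have hg : ∑' n : ℤ, (if n = 0 then (1 / 2 : ℂ) else if n = -1 then 1 / 2 else 0) = 1 := by
    rw [tsum_eq_sum (s := {0, -1}) (by
      intro n hn
      simp only [Finset.mem_insert, Finset.mem_singleton, not_or] at hn
      simp [hn.1, hn.2])]
    rw [Finset.sum_pair (by norm_num)]
    norm_num
  rw [← hg]
  simp only [thk, ← tsum_mul_left]
  have hterm : ∀ (τ : ℂ) (n : ℤ), ‖cexp (-(π * I * τ / 4)) * thkTerm 1 n τ 0‖ =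
      |(n : ℝ) + 1 / 2| * Real.exp (-(π * (n * (n + 1)) * τ.im)) := fun τ n => by
    rw [norm_mul, norm_thkTerm, Complex.norm_exp, pow_one, mul_left_comm, ← Real.exp_add]
    congr 2
    have : (-(π * I * τ / 4) : ℂ) = ((π / 4 : ℝ) : ℂ) * (-(I * τ)) := by push_cast; ring
    rw [this, Complex.re_ofReal_mul]
    simp
    ring
  have hn0 : ∀ n : ℤ, 0 ≤ (n : ℝ) * (n + 1) := fun n => by
    have : (0 : ℤ) ≤ n * (n + 1) := by
      rcases le_or_gt 0 n with h | h
      · positivity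
      · nlinarith
    exact_mod_cast this
  refine tendsto_tsum_of_dominated_convergence
    (bound := fun n => ‖cexp (-(π * I * I / 4)) * thkTerm 1 n I 0‖) ?_ ?_ ?_
  · exact ((summable_thkTerm 1 (by simp) 0).mul_left _).norm
  · intro n
    by_cases h0 : n = 0
    · subst h0
      refine tendsto_const_nhds.congr fun τ => ?_
      simp only [thkTerm, if_true]
      rw [mul_left_comm, ← Complex.exp_add]
      ring_nf
      simp
    by_cases h1 : n = -1
    · subst h1
      refine tendsto_const_nhds.congr fun τ => ?_
      simp only [thkTerm]
      rw [mul_left_comm, ← Complex.exp_add]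
      push_cast
      ring_nf
      norm_num
    · rw [if_neg h0, if_neg h1, tendsto_zero_iff_norm_tendsto_zero]
      simp only [hterm]
      have hpos : 0 < π * ((n : ℝ) * (n + 1)) := by
        have : (0 : ℤ) < n * (n + 1) := by
          rcases lt_or_gt_of_ne h0 with h | h
          · have : n + 1 < 0 := by omega
            exact mul_pos_of_neg_of_neg h this
          · positivity
        have : (0 : ℝ) < n * (n + 1) := by exact_mod_cast this
        positivity
      have := (Real.tendsto_exp_neg_atTop_nhds_zero.comp
        ((tendsto_comap (f := Complex.im)).const_mul_atTop hpos)).const_mul |(n : ℝ) + 1 / 2|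
      simpa using! this
  · filter_upwards [imInfty_eventually_im_gt 1] with τ hτ n
    rw [hterm, hterm]
    refine mul_le_mul_of_nonneg_left (Real.exp_le_exp.mpr ?_) (abs_nonneg _)
    have := mul_le_mul_of_nonneg_left hτ.le (mul_nonneg pi_pos.le (hn0 n))
    simpa using this

lemma differentiableAt_thk_one {τ : ℂ} (hτ : 0 < τ.im) :
    DifferentiableAt ℂ (fun t => thk 1 t 0) τ := (hasDerivAt_thk_tau 1 hτ 0).differentiableAt

/-- The eighth power of `∑ (-1)^n (n+1/2) q^{(n+1/2)²/2}` is a cusp form of weight `12`, hence a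
multiple of `η²⁴`. -/
lemma exists_thk_one_pow : ∃ c : ℂ, ∀ τ : ℂ, 0 < τ.im → thk 1 τ 0 ^ 8 = c * etaD τ ^ 24 := by
  obtain ⟨F, hF⟩ := exists_cuspForm 12 (fun τ => thk 1 τ 0 ^ 8)
    (fun τ h => (differentiableAt_thk_one h).pow 8)
    (fun τ _ => by
      simp only [thk_one_add_one, mul_pow, ← Complex.exp_nat_mul]
      have : ((8 : ℕ) : ℂ) * (π * I / 4) = 2 * π * I := by push_cast; ring
      rw [this, Complex.exp_two_pi_mul_I, one_mul])
    (fun τ h => by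
      have h4 : ((-I * τ) ^ (1 / 2 : ℂ)) ^ 8 = τ ^ 4 := by
        rw [← Complex.cpow_nat_mul]
        have : ((8 : ℕ) : ℂ) * (1 / 2) = (4 : ℕ) := by norm_num
        rw [this, Complex.cpow_natCast, mul_pow, neg_pow, I_pow_four]
        ring
      simp only [thk_one_S h, mul_pow, h4]
      have : (-I) ^ 8 = 1 := by
        rw [show (-I) ^ 8 = (I ^ 4) ^ 2 by ring, I_pow_four, one_pow]
      rw [this]
      ring)
    (by
      have h1 := tendsto_thk_one.pow 8
      have h2 : Tendsto (fun τ : ℂ => cexp (2 * π * I * τ)) imInfty (𝓝 0) := by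
        rw [tendsto_zero_iff_norm_tendsto_zero]
        have h3 : Tendsto (fun τ : ℂ => Real.exp (-(2 * π * τ.im))) imInfty (𝓝 0) :=
          Real.tendsto_exp_neg_atTop_nhds_zero.comp
            (tendsto_comap.const_mul_atTop (by positivity))
        refine h3.congr fun τ => ?_
        simpa using (norm_cexp_q τ 0).symm
      have h4 := h2.mul h1
      rw [zero_mul] at h4
      refine h4.congr fun τ => ?_
      rw [mul_pow, ← Complex.exp_nat_mul, ← mul_assoc, ← Complex.exp_add]
      have : 2 * π * I * τ + ((8 : ℕ) : ℂ) * -(π * I * τ / 4) = 0 := by push_cast; ring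
      rw [this, Complex.exp_zero, one_mul])
  obtain ⟨c, hc⟩ := CuspForm.exists_smul_discriminant_of_weight_eq_twelve F
  refine ⟨c, fun τ hτ => ?_⟩
  have := hF ⟨τ, hτ⟩
  rw [← hc] at this
  rw [etaD_eq]
  exact this.symm

lemma thk_one_ne_zero {τ : ℂ} (hτ : 0 < τ.im) : thk 1 τ 0 ≠ 0 := by
  obtain ⟨c, hc⟩ := exists_thk_one_pow
  intro h
  have h1 := hc τ hτ
  rw [h, zero_pow (by norm_num)] at h1
  have hc0 : c = 0 := (mul_eq_zero.mp h1.symm).resolve_right (pow_ne_zero _ (etaD_ne_zero hτ))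
  have h2 : Tendsto (fun τ => cexp (-(π * I * τ / 4)) * thk 1 τ 0) imInfty (𝓝 0) := by
    refine tendsto_const_nhds.congr' ?_
    filter_upwards [imInfty_eventually_im_gt 0] with t ht
    have := hc t ht
    rw [hc0, zero_mul] at this
    rw [pow_eq_zero_iff (by norm_num)] at this
    rw [this, mul_zero]
  exact zero_ne_one (tendsto_nhds_unique h2 tendsto_thk_one)

lemma thk_three_zero {τ : ℂ} (hτ : 0 < τ.im) : thk 3 τ 0 = Eis2 τ / 4 * thk 1 τ 0 := by
  obtain ⟨c, hc⟩ := exists_thk_one_pow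
  have h1 := (hasDerivAt_thk_tau 1 hτ 0).pow 8
  have h2 := ((hasDerivAt_etaD hτ).pow 24).const_mul c
  have h3 := h1.unique (h2.congr_of_eventuallyEq (by
    filter_upwards [isOpen_upperHalfPlaneSet.mem_nhds hτ] with z hz
    exact hc z hz))
  have h4 : 8 * (π * I) * thk 1 τ 0 ^ 7 * (thk 3 τ 0 - Eis2 τ / 4 * thk 1 τ 0) = 0 := by
    have := hc τ hτ
    push_cast at h3
    linear_combination h3 - 2 * π * I * Eis2 τ * this
  have hpi : (π : ℂ) ≠ 0 := by exact_mod_cast pi_ne_zero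
  have := (mul_eq_zero.mp h4).resolve_left (by simp [hpi, thk_one_ne_zero hτ])
  linear_combination this

/-! ### Formal differential equations for a solution of the heat equation -/

section Formal

variable {R : Type*} [CommRing R]

/-- The numerator `e₂ t₀² - 12 (t₀ t₂ - t₁²)` of `φ_{0,1}` in terms of the jet `t` of theta. -/
def jetB (e2 : R) (t : ℕ → R) : R := e2 * t 0 ^ 2 - 12 * (t 0 * t 2 - t 1 ^ 2)

/-- The first derivative of `jetB`. -/
def jetB1 (e2 : R) (t : ℕ → R) : R := 2 * e2 * t 0 * t 1 - 12 * (t 0 * t 3 - t 1 * t 2)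

/-- The second derivative of `jetB`. -/
def jetB2 (e2 : R) (t : ℕ → R) : R :=
  2 * e2 * (t 1 ^ 2 + t 0 * t 2) - 12 * (t 0 * t 4 - t 2 ^ 2)

/-- `B' θ - 2 B θ'`, which is `θ³` times the derivative of `B / θ²`; for the Jacobi theta function
it is a multiple of `θ³ ℘'`. -/
def jetC (e2 : R) (t : ℕ → R) : R := jetB1 e2 t * t 0 - 2 * jetB e2 t * t 1

/-- The first derivative of `jetC`. -/
def jetC1 (e2 : R) (t : ℕ → R) : R :=
  jetB2 e2 t * t 0 - jetB1 e2 t * t 1 - 2 * jetB e2 t * t 2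

/-- Cleared form of the second order equation `℘'' = 6 ℘² - g₂ / 2`. -/
def jetQ (e2 e4 : R) (t : ℕ → R) : R :=
  2 * jetC1 e2 t * t 0 - 6 * jetC e2 t * t 1 - jetB e2 t ^ 2 + e4 * t 0 ^ 4

/-- Cleared form of the Weierstrass equation `℘'² = 4 ℘³ - g₂ ℘ - g₃`. -/
def jetS (e2 e4 e6 : R) (t : ℕ → R) : R :=
  3 * jetC e2 t ^ 2 - jetB e2 t ^ 3 + 3 * e4 * jetB e2 t * t 0 ^ 4 - 2 * e6 * t 0 ^ 6

/-- Jet form of the heat identity for `φ_{0,1}²`. -/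
def jetG (e2 e4 e6 : R) (t : ℕ → R) : R :=
  2 * jetB e2 t * (2 * (e2 ^ 2 - e4) * t 0 ^ 2 + 24 * e2 * t 0 * t 2
      - 144 * (t 2 ^ 2 + t 0 * t 4 - 2 * t 1 * t 3))
    - 11 * e2 * jetB e2 t ^ 2 - 6 * (jetB e2 t * jetB2 e2 t + jetB1 e2 t ^ 2)
    + 7 * e4 * jetB e2 t * t 0 ^ 2 + 4 * e6 * t 0 ^ 4

lemma sq_mul_jetG (e2 e4 e6 : R) (t : ℕ → R) :
    t 0 ^ 2 * jetG e2 e4 e6 t = -2 * jetS e2 e4 e6 t + 9 * jetB e2 t * jetQ e2 e4 t := by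
  simp only [jetG, jetS, jetQ, jetC1, jetC, jetB2, jetB1, jetB]
  ring

variable {K : Type*} [CommRing K] [Algebra K R] (d δ : Derivation K R R) {e2 e4 e6 : R} {t : ℕ → R}

/-- The derivative of the cleared Weierstrass equation is a multiple of the cleared second order
equation. -/
lemma jet_first (h2 : d e2 = 0) (h4 : d e4 = 0) (h6 : d e6 = 0) (ht : ∀ k, d (t k) = t (k + 1)) :
    d (jetS e2 e4 e6 t) * t 0 - 6 * jetS e2 e4 e6 t * t 1 = 3 * jetC e2 t * jetQ e2 e4 t := by
  have hn : ∀ n : ℕ, [n.AtLeastTwo] → d (OfNat.ofNat n : R) = 0 := fun n _ => d.map_natCast n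
  simp only [jetS, jetQ, jetC1, jetC, jetB2, jetB1, jetB, map_sub, map_add, Derivation.leibniz,
    Derivation.leibniz_pow, h2, h4, h6, ht, hn, smul_eq_mul, nsmul_eq_mul]
  push_cast
  ring

/-- The heat equation `δθ = 12 θ'' - 3 e₂ θ` and Ramanujan's equations for `δ` (which plays the
role of `24 q d/dq`) relate the derivatives of both cleared Weierstrass equations. -/
lemma jet_second (h2 : d e2 = 0) (h4 : d e4 = 0) (ht : ∀ k, d (t k) = t (k + 1))
    (h6 : d e6 = 0) (hδ2 : δ e2 = 2 * (e2 ^ 2 - e4)) (hδ4 : δ e4 = 8 * (e2 * e4 - e6))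
    (hδ6 : δ e6 = 12 * (e2 * e6 - e4 ^ 2)) (hδt : ∀ k, δ (t k) = 12 * t (k + 2) - 3 * e2 * t k) :
    (δ (jetS e2 e4 e6 t) * t 0 - 6 * δ (t 0) * jetS e2 e4 e6 t) * t 0
      - 24 * t 1 * (d (jetS e2 e4 e6 t) * t 0 - 6 * jetS e2 e4 e6 t * t 1) =
    36 * jetC e2 t * (d (jetQ e2 e4 t) * t 0 - 4 * jetQ e2 e4 t * t 1)
      + 18 * (e4 * t 0 ^ 4 - jetB e2 t ^ 2) * jetQ e2 e4 t
      + 12 * (e2 * t 0 ^ 2 + jetB e2 t) * jetS e2 e4 e6 t := by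
  have hn : ∀ n : ℕ, [n.AtLeastTwo] → d (OfNat.ofNat n : R) = 0 := fun n _ => d.map_natCast n
  have hn' : ∀ n : ℕ, [n.AtLeastTwo] → δ (OfNat.ofNat n : R) = 0 := fun n _ => δ.map_natCast n
  rw [jet_first d h2 h4 h6 ht]
  simp only [jetS, jetQ, jetC1, jetC, jetB2, jetB1, jetB, map_sub, map_add, Derivation.leibniz,
    Derivation.leibniz_pow, h2, h4, hδ2, hδ4, hδ6, hδt, ht, hn, hn', smul_eq_mul, nsmul_eq_mul]
  push_cast
  ring

end Formal

open PowerSeries in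
/-- Uniqueness argument for the formal heat equation: the identities `jet_first` and `jet_second`
force every coefficient of the cleared Weierstrass equation to vanish, once the first four do. -/
theorem formal_jets_eq_zero {K A : Type*} [Field K] [CharZero K] [CommRing A]
    [Algebra K A] (d δ : Derivation K A⟦X⟧ A⟦X⟧) (hdX : d X = 1) (hδX : δ X = 0)
    {e2 e4 e6 c p : A⟦X⟧} {t : ℕ → A⟦X⟧} (hc : d c = 0) (h2c : e2 = 24 * c)
    (h4 : d e4 = 0) (h6 : d e6 = 0) (ht : ∀ k, d (t k) = t (k + 1))
    (hδ2 : δ e2 = 2 * (e2 ^ 2 - e4)) (hδ4 : δ e4 = 8 * (e2 * e4 - e6))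
    (hδ6 : δ e6 = 12 * (e2 * e6 - e4 ^ 2)) (hδt : ∀ k, δ (t k) = 12 * t (k + 2) - 3 * e2 * t k)
    (h0 : t 0 = X + c * X ^ 3 + p * X ^ 5) :
    jetQ e2 e4 t = 0 ∧ jetG e2 e4 e6 t = 0 := by
  have hn : ∀ n : ℕ, [n.AtLeastTwo] → d (OfNat.ofNat n : A⟦X⟧) = 0 := fun n _ => d.map_natCast n
  have hunit : ∀ n : ℤ, n ≠ 0 → IsUnit (n : A) := fun n h => by
    simpa using (IsUnit.mk0 (n : K) (by exact_mod_cast h)).map (algebraMap K A)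
  have h2 : d e2 = 0 := by
    rw [h2c, Derivation.leibniz, hn, hc]; simp
  have ht1 : t 1 = 1 + 3 * c * X ^ 2 + (5 * p + X * d p) * X ^ 4 := by
    have e : t 1 = d (t 0) := (ht 0).symm
    rw [e, h0]
    simp only [map_add, Derivation.leibniz, Derivation.leibniz_pow, hc, hdX, smul_eq_mul,
      nsmul_eq_mul]
    push_cast
    ring
  obtain ⟨p2, ht2⟩ : ∃ p2, t 2 = 6 * c * X + p2 * X ^ 3 := by
    refine ⟨20 * p + 10 * X * d p + X ^ 2 * d (d p), ?_⟩
    have e : t 2 = d (t 1) := (ht 1).symm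
    rw [e, ht1]
    simp only [map_add, Derivation.leibniz, Derivation.leibniz_pow, hc, hdX, smul_eq_mul,
      nsmul_eq_mul, hn, Derivation.map_one_eq_zero]
    push_cast
    ring
  generalize 5 * p + X * d p = p1 at ht1
  obtain ⟨v, hv⟩ : ∃ v, v = c + p * X ^ 2 := ⟨_, rfl⟩
  have h0v : t 0 = X * (1 + X ^ 2 * v) := by rw [h0, hv]; ring
  obtain ⟨b, hB⟩ : ∃ b, jetB e2 t = 12 + 24 * c * X ^ 2 + b * X ^ 4 := by
    refine ⟨24 * c * (2 * v + X ^ 2 * v ^ 2) - 12 * (p2 + 6 * c * v + X ^ 2 * v * p2)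
      + 12 * (9 * c ^ 2 + 2 * p1 + 6 * c * p1 * X ^ 2 + p1 ^ 2 * X ^ 4), ?_⟩
    rw [jetB, h0v, ht1, ht2, h2c]
    ring
  have hB1 : jetB1 e2 t = 48 * c * X + (4 * b + X * d b) * X ^ 3 := by
    have : jetB1 e2 t = d (jetB e2 t) := by
      simp only [jetB1, jetB, map_sub, Derivation.leibniz,
        Derivation.leibniz_pow, h2, ht, hn, smul_eq_mul, nsmul_eq_mul]
      push_cast
      ring
    rw [this, hB]
    simp only [map_add, Derivation.leibniz, Derivation.leibniz_pow, hc, hdX, smul_eq_mul,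
      nsmul_eq_mul, hn]
    push_cast
    ring
  generalize 4 * b + X * d b = b1 at hB1
  obtain ⟨c4, hC⟩ : ∃ c4, jetC e2 t = -24 - 72 * c * X ^ 2 + c4 * X ^ 4 := by
    refine ⟨b1 + 48 * c * v + b1 * v * X ^ 2 - 2 * (12 * p1 + 72 * c ^ 2 + 24 * c * p1 * X ^ 2
      + b * (1 + 3 * c * X ^ 2 + p1 * X ^ 4)), ?_⟩
    rw [jetC, hB1, hB, h0v, ht1]
    ring
  have hcn : ∀ n : ℕ, [n.AtLeastTwo] → constantCoeff (OfNat.ofNat n : A⟦X⟧) = OfNat.ofNat n :=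
    fun n _ => map_ofNat (constantCoeff (R := A)) n
  have hCc : constantCoeff (jetC e2 t) = -24 := by rw [hC]; simp [hcn]
  have hBc : constantCoeff (jetB e2 t) = 12 := by rw [hB]; simp [hcn]
  have ht0c : constantCoeff (t 0) = 0 := by rw [h0v]; simp
  have ht1c : constantCoeff (t 1) = 1 := by rw [ht1]; simp
  have hCu : IsUnit (jetC e2 t) := by
    rw [PowerSeries.isUnit_iff_constantCoeff, hCc]
    simpa using hunit (-24) (by norm_num)
  have h3 : IsUnit (3 : A⟦X⟧) := by
    rw [PowerSeries.isUnit_iff_constantCoeff]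
    simpa [hcn] using hunit 3 (by norm_num)
  have hbase : X ^ 4 ∣ jetS e2 e4 e6 t := by
    refine ⟨3 * (72 ^ 2 * c ^ 2 - 2 * (24 + 72 * c * X ^ 2) * c4 + c4 ^ 2 * X ^ 4)
      - (36 * 576 * c ^ 2 + 24 ^ 3 * c ^ 3 * X ^ 2 + 3 * (12 + 24 * c * X ^ 2) ^ 2 * b
        + 3 * (12 + 24 * c * X ^ 2) * b ^ 2 * X ^ 4 + b ^ 3 * X ^ 8)
      + 3 * e4 * jetB e2 t * (1 + X ^ 2 * v) ^ 4 - 2 * e6 * X ^ 2 * (1 + X ^ 2 * v) ^ 6, ?_⟩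
    rw [jetS, hC, hB, h0v]
    ring
  have hfirst := jet_first (t := t) d h2 h4 h6 ht
  have hsecond := jet_second (t := t) d δ h2 h4 ht h6 hδ2 hδ4 hδ6 hδt
  have hstep : ∀ j, X ^ (j + 4) ∣ jetS e2 e4 e6 t := by
    intro j
    induction j with
    | zero => simpa using hbase
    | succ j ih =>
      obtain ⟨s, hs⟩ := ih
      obtain ⟨C', hC'⟩ := hCu.exists_right_inv
      have hdS : d (jetS e2 e4 e6 t) = X ^ (j + 3) * (((j : A⟦X⟧) + 4) * s + X * d s) := by
        rw [hs]
        simp only [Derivation.leibniz, Derivation.leibniz_pow, hdX, smul_eq_mul, nsmul_eq_mul]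
        push_cast
        ring
      have hδS : δ (jetS e2 e4 e6 t) = X ^ (j + 4) * δ s := by
        rw [hs]
        simp only [Derivation.leibniz, Derivation.leibniz_pow, hδX, smul_eq_mul, nsmul_eq_mul]
        ring
      obtain ⟨r, hr⟩ : ∃ r, jetQ e2 e4 t = X ^ (j + 4) * r := by
        obtain ⟨w, hw⟩ := h3.exists_left_inv
        refine ⟨w * C' * ((((j : A⟦X⟧) + 4) * s + X * d s) * (1 + X ^ 2 * v) - 6 * s * t 1), ?_⟩
        have : jetQ e2 e4 t = w * C' * (3 * jetC e2 t * jetQ e2 e4 t) := by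
          linear_combination (-jetQ e2 e4 t) * hw - w * 3 * jetQ e2 e4 t * hC'
        rw [this, ← hfirst, hdS, hs, h0v]
        ring
      have hdQ : d (jetQ e2 e4 t) = X ^ (j + 3) * (((j : A⟦X⟧) + 4) * r + X * d r) := by
        rw [hr]
        simp only [Derivation.leibniz, Derivation.leibniz_pow, hdX, smul_eq_mul, nsmul_eq_mul]
        push_cast
        ring
      have e1 : (((j : A⟦X⟧) + 4) * s + X * d s) * (1 + X ^ 2 * v) - 6 * s * t 1 = 3 * jetC e2 t * r := by
        apply PowerSeries.X_pow_mul_cancel (k := j + 4)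
        rw [hdS, hr, hs] at hfirst
        have := hfirst
        rw [h0v] at this
        linear_combination this
      have e2' : (δ s * t 0 - 6 * δ (t 0) * s) * t 0
            - 24 * t 1 * (3 * jetC e2 t * r) =
          36 * jetC e2 t * ((((j : A⟦X⟧) + 4) * r + X * d r) * (1 + X ^ 2 * v) - 4 * r * t 1)
            + 18 * (e4 * t 0 ^ 4 - jetB e2 t ^ 2) * r
            + 12 * (e2 * t 0 ^ 2 + jetB e2 t) * s := by
        apply PowerSeries.X_pow_mul_cancel (k := j + 4)
        rw [hfirst, hdQ, hδS, hr, hs] at hsecond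
        linear_combination hsecond
          + 36 * jetC e2 t * X ^ (j + 3) * (((j : A⟦X⟧) + 4) * r + X * d r) * h0v
      have f1 := congrArg constantCoeff e1
      have f2 := congrArg constantCoeff e2'
      simp only [map_sub, map_add, map_mul, map_pow, map_natCast, hcn, map_one, hCc, hBc,
        ht0c, ht1c, constantCoeff_X] at f1 f2
      have f3 : (12 * ((j : A) + 2) * (j + 1)) * constantCoeff s = 0 := by
        linear_combination (12 * j + 60) * f1 - f2
      have hu : IsUnit (12 * ((j : A) + 2) * (j + 1)) := by
        have := hunit (12 * ((j : ℤ) + 2) * (j + 1)) (by positivity)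
        push_cast at this
        exact this
      have f4 : constantCoeff s = 0 := (hu.mul_right_eq_zero).mp f3
      obtain ⟨s', hs'⟩ := PowerSeries.X_dvd_iff.mpr f4
      exact ⟨s', by rw [hs, hs']; ring⟩
  have hS : jetS e2 e4 e6 t = 0 := by
    ext n
    exact PowerSeries.X_pow_dvd_iff.mp (hstep n) n (by omega)
  have hQ : jetQ e2 e4 t = 0 := by
    rw [hS] at hfirst
    have : 3 * jetC e2 t * jetQ e2 e4 t = 0 := by rw [← hfirst]; simp
    exact ((h3.mul hCu).mul_right_eq_zero).mp this
  refine ⟨hQ, ?_⟩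
  have hG := sq_mul_jetG e2 e4 e6 t
  rw [hS, hQ, h0v] at hG
  have hu : IsUnit ((1 + X ^ 2 * v) ^ 2) := by
    apply IsUnit.pow
    rw [PowerSeries.isUnit_iff_constantCoeff]
    simp
  refine (hu.mul_right_eq_zero).mp ?_
  apply PowerSeries.X_pow_mul_cancel (k := 2)
  linear_combination hG

/-! ### Transfer of the formal differential equations to the theta function -/

lemma map_jetQ {R S : Type*} [CommRing R] [CommRing S] (f : R →+* S) (e2 e4 : R) (t : ℕ → R) :
    f (jetQ e2 e4 t) = jetQ (f e2) (f e4) (fun k => f (t k)) := by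
  simp only [jetQ, jetC1, jetC, jetB2, jetB1, jetB, map_sub, map_add, map_mul, map_pow, map_ofNat]

lemma map_jetG {R S : Type*} [CommRing R] [CommRing S] (f : R →+* S) (e2 e4 e6 : R) (t : ℕ → R) :
    f (jetG e2 e4 e6 t) = jetG (f e2) (f e4) (f e6) (fun k => f (t k)) := by
  simp only [jetG, jetB2, jetB1, jetB, map_sub, map_add, map_mul, map_pow, map_ofNat]

section CoefficientwiseDerivation

open PowerSeries Finset

/-- The derivation of `A⟦X⟧` which applies the derivation `δ` of `A` to every coefficient. -/
def coeffDeriv {K A : Type*} [CommRing K] [CommRing A] [Algebra K A] (δ : Derivation K A A) :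
    Derivation K A⟦X⟧ A⟦X⟧ :=
  Derivation.mk'
    { toFun := fun f => PowerSeries.mk fun n => δ (coeff n f)
      map_add' := fun f g => by ext n; simp
      map_smul' := fun a f => by
        ext n
        simp }
    (fun f g => by
      ext n
      simp only [LinearMap.coe_mk, AddHom.coe_mk, coeff_mk, coeff_mul, map_sum,
        Derivation.leibniz, smul_eq_mul, map_add, Finset.sum_add_distrib]
      congr 1
      rw [← Finset.Nat.sum_antidiagonal_swap]
      rfl)

lemma coeff_coeffDeriv {K A : Type*} [CommRing K] [CommRing A] [Algebra K A]
    (δ : Derivation K A A) (f : A⟦X⟧) (n : ℕ) :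
    coeff n (coeffDeriv δ f) = δ (coeff n f) := by
  simp [coeffDeriv]

end CoefficientwiseDerivation

/-- The algebra of holomorphic functions on the upper half-plane. -/
def holoH : Subalgebra ℂ (ℍ → ℂ) where
  carrier := {F | MDiff F}
  mul_mem' hF hG := MDifferentiable.mul hF hG
  add_mem' hF hG := MDifferentiable.add hF hG
  algebraMap_mem' _ := mdifferentiable_const

/-- The derivation `24 q d/dq` of the algebra of holomorphic functions on the upper half-plane. -/
def holoDeriv : Derivation ℂ holoH holoH :=
  Derivation.mk'
    { toFun := fun F => ⟨(24 : ℂ) • Derivative.normalizedDerivOfComplex F.1,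
        holoH.smul_mem (Derivative.normalizedDerivOfComplex_mdifferentiable F.2) _⟩
      map_add' := fun F G => by
        ext1
        simp [Derivative.normalizedDerivOfComplex_add _ _ F.2 G.2]
      map_smul' := fun a F => by
        ext1
        simp [Derivative.normalizedDerivOfComplex_smul _ _ F.2, smul_comm a] }
    (fun F G => by
      ext τ
      simp [Derivative.normalizedDerivOfComplex_mul _ _ F.2 G.2]
      ring)

lemma mdiff_of_differentiableAt {f : ℂ → ℂ} (h : ∀ τ : ℂ, 0 < τ.im → DifferentiableAt ℂ f τ) :
    MDiff (fun τ : ℍ => f τ) := by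
  rw [UpperHalfPlane.mdifferentiable_iff]
  intro τ hτ
  refine (DifferentiableAt.congr_of_eventuallyEq (h τ hτ) ?_).differentiableWithinAt
  filter_upwards [isOpen_upperHalfPlaneSet.mem_nhds hτ] with w hw
  simp [ofComplex_apply_of_im_pos hw]

/-- The element of `holoH` defined by a function which is holomorphic on the half-plane. -/
def toHolo (f : ℂ → ℂ) (h : ∀ τ : ℂ, 0 < τ.im → DifferentiableAt ℂ f τ) : holoH :=
  ⟨fun τ => f τ, mdiff_of_differentiableAt h⟩

lemma holoDeriv_toHolo (f : ℂ → ℂ) (h : ∀ τ : ℂ, 0 < τ.im → DifferentiableAt ℂ f τ) (τ : ℍ) :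
    (holoDeriv (toHolo f h)).1 τ = 24 * ((2 * π * I)⁻¹ * deriv f τ) := by
  have : deriv ((fun τ : ℍ => f τ) ∘ ofComplex) (τ : ℂ) = deriv f τ := by
    apply Filter.EventuallyEq.deriv_eq
    filter_upwards [isOpen_upperHalfPlaneSet.mem_nhds τ.2] with w hw
    simp [ofComplex_apply_of_im_pos hw]
  simp [holoDeriv, toHolo, Derivative.normalizedDerivOfComplex, this]

lemma hasDerivAt_thk_quot (k : ℕ) {τ : ℂ} (hτ : 0 < τ.im) :
    HasDerivAt (fun t => thk k t 0 / thk 1 t 0)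
      (π * I * (thk (k + 2) τ 0 / thk 1 τ 0 - Eis2 τ / 4 * (thk k τ 0 / thk 1 τ 0))) τ := by
  have h1 := thk_one_ne_zero hτ
  refine ((hasDerivAt_thk_tau k hτ 0).div (hasDerivAt_thk_tau 1 hτ 0) h1).congr_deriv ?_
  rw [show 1 + 2 = 3 from rfl, thk_three_zero hτ]
  field_simp

/-- The normalised Taylor coefficients `ϑ^{(k)}(τ,0) / ϑ'(τ,0)`, as holomorphic functions. -/
def thq (k : ℕ) : holoH :=
  toHolo (fun τ => thk k τ 0 / thk 1 τ 0)
    (fun _ hτ => (hasDerivAt_thk_quot k hτ).differentiableAt)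

/-- `E₂` as an element of `holoH`. -/
def holoE2 : holoH := toHolo Eis2 fun _ hτ => differentiableAt_Eis2 hτ
/-- `E₄` as an element of `holoH`. -/
def holoE4 : holoH := toHolo Eis4 fun _ hτ => differentiableAt_Eis4 hτ
/-- `E₆` as an element of `holoH`. -/
def holoE6 : holoH := toHolo Eis6 fun _ hτ => differentiableAt_Eis6 hτ

lemma holoDeriv_E2 : holoDeriv holoE2 = 2 * (holoE2 ^ 2 - holoE4) := by
  ext τ
  have := Complex.two_pi_I_ne_zero
  rw [holoE2, holoDeriv_toHolo, deriv_Eis2 τ.2]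
  change _ = 2 * (Eis2 τ ^ 2 - Eis4 τ)
  field_simp
  ring

lemma holoDeriv_E4 : holoDeriv holoE4 = 8 * (holoE2 * holoE4 - holoE6) := by
  ext τ
  have := Complex.two_pi_I_ne_zero
  rw [holoE4, holoDeriv_toHolo, deriv_Eis4 τ.2]
  change _ = 8 * (Eis2 τ * Eis4 τ - Eis6 τ)
  field_simp
  ring

lemma holoDeriv_E6 : holoDeriv holoE6 = 12 * (holoE2 * holoE6 - holoE4 ^ 2) := by
  ext τ
  have := Complex.two_pi_I_ne_zero
  rw [holoE6, holoDeriv_toHolo, deriv_Eis6 τ.2]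
  change _ = 12 * (Eis2 τ * Eis6 τ - Eis4 τ ^ 2)
  field_simp
  ring

lemma holoDeriv_thq (k : ℕ) : holoDeriv (thq k) = 12 * thq (k + 2) - 3 * holoE2 * thq k := by
  ext τ
  have := Complex.two_pi_I_ne_zero
  rw [thq, holoDeriv_toHolo, (hasDerivAt_thk_quot k τ.2).deriv]
  change _ = 12 * (thk (k + 2) τ 0 / thk 1 τ 0) - 3 * Eis2 τ * (thk k τ 0 / thk 1 τ 0)
  have hpi : (π : ℂ) ≠ 0 := by exact_mod_cast Real.pi_ne_zero
  have := Complex.I_ne_zero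
  have h1 := thk_one_ne_zero τ.2
  field_simp
  ring

lemma thq_even {k : ℕ} (hk : Even k) : thq k = 0 := by
  ext τ
  simp [thq, toHolo, thk_even_zero hk]

lemma thq_one : thq 1 = 1 := by
  ext τ
  simp [thq, toHolo, div_self (thk_one_ne_zero τ.2)]

lemma thq_three : thq 3 = (1 / 4 : ℂ) • holoE2 := by
  ext τ
  have h1 := thk_one_ne_zero τ.2
  simp only [thq, toHolo, holoE2, thk_three_zero τ.2]
  change _ = 1 / 4 * Eis2 τ
  field_simp

section Jets

open PowerSeries

/-- The Taylor series at `z = 0` (in the variable `2πiz`) of the `k`-th derivative of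
`ϑ(τ,z) / ϑ'(τ,0)`. -/
def thser (k : ℕ) : holoH⟦X⟧ := PowerSeries.mk fun n => (1 / (n.factorial : ℂ)) • thq (k + n)

lemma thser_jets_eq_zero :
    jetQ (C holoE2) (C holoE4) thser = 0 ∧ jetG (C holoE2) (C holoE4) (C holoE6) thser = 0 := by
  have hC : ∀ a : holoH, coeffDeriv holoDeriv (C a) = C (holoDeriv a) := fun a => by
    ext1 n
    rw [coeff_coeffDeriv, coeff_C, coeff_C]
    split_ifs <;> simp
  have hdC : ∀ a : holoH, (PowerSeries.derivative holoH).restrictScalars ℂ (C a) = 0 := fun a => by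
    simp
  have hCn : ∀ n : ℕ, [n.AtLeastTwo] → (C (OfNat.ofNat n) : holoH⟦X⟧) = OfNat.ofNat n :=
    fun n _ => map_ofNat C n
  refine formal_jets_eq_zero (K := ℂ) ((PowerSeries.derivative holoH).restrictScalars ℂ)
    (coeffDeriv holoDeriv) (by simp) ?_ (c := C ((1 / 24 : ℂ) • holoE2))
    (p := PowerSeries.mk fun n => coeff (n + 5) (thser 0)) (hdC _) ?_ (hdC _) (hdC _) ?_ ?_ ?_ ?_ ?_ ?_
  · ext1 n
    rw [coeff_coeffDeriv, coeff_X]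
    split_ifs <;> simp
  · rw [← map_ofNat (C : holoH →+* _), ← map_mul]
    congr 1
    ext τ
    change Eis2 τ = 24 * (1 / 24 * Eis2 τ)
    ring
  · intro k
    ext1 n
    simp only [Derivation.restrictScalars_apply, coeff_derivative, thser, coeff_mk]
    rw [show k + (n + 1) = k + 1 + n by ring, Nat.factorial_succ]
    ext τ
    have : ((n + 1 : ℕ) : ℂ) ≠ 0 := by exact_mod_cast n.succ_ne_zero
    have : (n.factorial : ℂ) ≠ 0 := by exact_mod_cast n.factorial_ne_zero
    simp
    field_simp
  · rw [hC, holoDeriv_E2]; simp [hCn]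
  · rw [hC, holoDeriv_E4]; simp [hCn]
  · rw [hC, holoDeriv_E6]; simp [hCn]
  · intro k
    ext1 n
    rw [coeff_coeffDeriv, ← map_ofNat (C : holoH →+* _) 12, ← map_ofNat (C : holoH →+* _) 3,
      ← map_mul, map_sub, coeff_C_mul, coeff_C_mul]
    simp only [thser, coeff_mk, Derivation.map_smul, holoDeriv_thq]
    rw [show k + n + 2 = k + 2 + n by ring]
    ext τ
    simp
    ring
  · ext1 n
    match n with
    | 0 => simp [thser, thq_even]
    | 1 => simp [thser, thq_one, coeff_X, coeff_mul_X_pow']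
    | 2 => simp [thser, thq_even, coeff_X, coeff_mul_X_pow']
    | 3 =>
      simp [thser, thq_three, coeff_X, coeff_mul_X_pow', Nat.factorial, smul_smul]
      norm_num
    | 4 => simp [thser, thq_even (show Even 4 by decide), coeff_X, coeff_mul_X_pow']
    | n + 5 => simp [coeff_X, coeff_mul_X_pow']

/-- The algebra of entire functions. -/
def entireAlg : Subalgebra ℂ (ℂ → ℂ) where
  carrier := {f | Differentiable ℂ f}
  mul_mem' hf hg := Differentiable.mul hf hg
  add_mem' hf hg := Differentiable.add hf hg
  algebraMap_mem' _ := differentiable_const _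

/-- Taylor expansion at the origin as a ring homomorphism on entire functions. -/
def taylorHom : entireAlg →+* ℂ⟦X⟧ where
  toFun f := PowerSeries.mk fun n => iteratedDeriv n f.1 0 / n.factorial
  map_one' := by
    ext n
    have : ((1 : entireAlg) : ℂ → ℂ) = fun _ => 1 := rfl
    rw [coeff_mk, this, iteratedDeriv_const, coeff_one]
    split_ifs with h <;> simp [h]
  map_zero' := by
    ext n
    have : ((0 : entireAlg) : ℂ → ℂ) = fun _ => 0 := rfl
    rw [coeff_mk, this, iteratedDeriv_const]
    simp
  map_add' f g := by
    ext n
    have hf : ContDiffAt ℂ n f.1 0 := (Differentiable.contDiff f.2).contDiffAt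
    have hg : ContDiffAt ℂ n g.1 0 := (Differentiable.contDiff g.2).contDiffAt
    rw [map_add, coeff_mk, coeff_mk, coeff_mk, ← add_div, ← iteratedDeriv_add hf hg]
    rfl
  map_mul' f g := by
    ext n
    have hf : ContDiffAt ℂ n f.1 0 := (Differentiable.contDiff f.2).contDiffAt
    have hg : ContDiffAt ℂ n g.1 0 := (Differentiable.contDiff g.2).contDiffAt
    have : ((f * g : entireAlg) : ℂ → ℂ) = f.1 * g.1 := rfl
    rw [coeff_mk, this, iteratedDeriv_mul hf hg, coeff_mul,
      Finset.Nat.sum_antidiagonal_eq_sum_range_succ_mk, Finset.sum_div]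
    refine Finset.sum_congr rfl fun i hi => ?_
    have hi' : i ≤ n := Nat.lt_succ_iff.mp (Finset.mem_range.mp hi)
    rw [coeff_mk, coeff_mk, Nat.cast_choose ℂ hi']
    have h1 : (n.factorial : ℂ) ≠ 0 := by exact_mod_cast n.factorial_ne_zero
    have h2 : (i.factorial : ℂ) ≠ 0 := by exact_mod_cast i.factorial_ne_zero
    have h3 : ((n - i).factorial : ℂ) ≠ 0 := by exact_mod_cast (n - i).factorial_ne_zero
    field_simp

lemma coeff_taylorHom (f : entireAlg) (n : ℕ) :
    coeff n (taylorHom f) = iteratedDeriv n f.1 0 / n.factorial := by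
  simp [taylorHom]

lemma taylorHom_algebraMap (a : ℂ) : taylorHom (algebraMap ℂ entireAlg a) = C a := by
  ext n
  have : ((algebraMap ℂ entireAlg a : entireAlg) : ℂ → ℂ) = fun _ => a := rfl
  rw [coeff_taylorHom, this, iteratedDeriv_const, coeff_C]
  split_ifs with h <;> simp [h]

lemma taylorHom_injective : Function.Injective taylorHom := by
  rw [injective_iff_map_eq_zero]
  intro f hf
  ext z
  have h0 : ∀ n, iteratedDeriv n f.1 0 = 0 := fun n => by
    have h1 : (n.factorial : ℂ) ≠ 0 := by exact_mod_cast n.factorial_ne_zero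
    have := congrArg (coeff n) hf
    rw [coeff_taylorHom, map_zero, div_eq_zero_iff] at this
    exact this.resolve_right h1
  have := Complex.taylorSeries_eq_of_entire' 0 z (f := f.1) f.2
  rw [← this]
  simp [h0]

/-- The `k`-th derivative of `w ↦ ϑ(τ, w/(2πi)) / ϑ'(τ,0)`, as an entire function. -/
def thEnt (τ : ℍ) (k : ℕ) : entireAlg :=
  ⟨fun w => thk k τ (w / (2 * π * I)) / thk 1 τ 0, fun w =>
    (((hasDerivAt_thk_z k τ.2 _).comp w
      ((hasDerivAt_id w).div_const (2 * π * I))).div_const _).differentiableAt⟩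

lemma deriv_thEnt (τ : ℍ) (k : ℕ) : deriv (thEnt τ k).1 = (thEnt τ (k + 1)).1 := by
  ext w
  have := (((hasDerivAt_thk_z k τ.2 _).comp w
      ((hasDerivAt_id w).div_const (2 * π * I))).div_const (thk 1 τ 0)).deriv
  refine this.trans ?_
  have := Complex.two_pi_I_ne_zero
  simp only [thEnt, id]
  field_simp

lemma iteratedDeriv_thEnt (τ : ℍ) (k n : ℕ) :
    iteratedDeriv n (thEnt τ k).1 = (thEnt τ (k + n)).1 := by
  induction n with
  | zero => simp
  | succ n ih => rw [iteratedDeriv_succ, ih, deriv_thEnt]; rfl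

/-- Evaluation of holomorphic functions at a point of the half-plane. -/
def evalH (τ : ℍ) : holoH →+* ℂ := (Pi.evalRingHom (fun _ : ℍ => ℂ) τ).comp holoH.val.toRingHom

lemma taylorHom_thEnt (τ : ℍ) (k : ℕ) :
    taylorHom (thEnt τ k) = PowerSeries.map (evalH τ) (thser k) := by
  ext n
  rw [coeff_map, thser, coeff_mk, coeff_taylorHom, iteratedDeriv_thEnt]
  change _ = 1 / (n.factorial : ℂ) * (thk (k + n) τ 0 / thk 1 τ 0)
  simp only [thEnt, zero_div]
  ring

end Jets

lemma jetQ_smul {R : Type*} [CommRing R] (e2 e4 a : R) (t : ℕ → R) :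
    jetQ e2 e4 (fun k => a * t k) = a ^ 4 * jetQ e2 e4 t := by
  simp only [jetQ, jetC1, jetC, jetB2, jetB1, jetB]
  ring

lemma jetG_smul {R : Type*} [CommRing R] (e2 e4 e6 a : R) (t : ℕ → R) :
    jetG e2 e4 e6 (fun k => a * t k) = a ^ 4 * jetG e2 e4 e6 t := by
  simp only [jetG, jetB2, jetB1, jetB]
  ring

lemma thEnt_apply (τ : ℍ) (k : ℕ) (z : ℂ) :
    thk 1 τ 0 * (thEnt τ k).1 (2 * π * I * z) = thk k τ z := by
  have := thk_one_ne_zero τ.2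
  simp only [thEnt, mul_div_cancel_left₀ z Complex.two_pi_I_ne_zero]
  field_simp

/-- The theta function satisfies the cleared form of `℘'' = 6 ℘² - g₂ / 2`. -/
lemma jetQ_thk {τ : ℂ} (hτ : 0 < τ.im) (z : ℂ) :
    jetQ (Eis2 τ) (Eis4 τ) (fun k => thk k τ z) = 0 := by
  lift τ to ℍ using hτ
  have h1 : jetQ (algebraMap ℂ entireAlg (Eis2 τ)) (algebraMap ℂ entireAlg (Eis4 τ)) (thEnt τ)
      = 0 := by
    apply taylorHom_injective
    rw [map_jetQ, map_zero]
    have := congrArg (PowerSeries.map (evalH τ)) thser_jets_eq_zero.1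
    rw [map_jetQ, map_zero, PowerSeries.map_C, PowerSeries.map_C] at this
    simp only [taylorHom_algebraMap, taylorHom_thEnt]
    exact this
  have h2 := congrArg ((Pi.evalRingHom (fun _ : ℂ => ℂ) (2 * π * I * z)).comp
    entireAlg.val.toRingHom) h1
  rw [map_jetQ, map_zero] at h2
  rw [show (fun k => thk k τ z) = fun k => thk 1 τ 0 * (thEnt τ k).1 (2 * π * I * z) from
    funext fun k => (thEnt_apply τ k z).symm, jetQ_smul, mul_eq_zero]
  exact .inr h2

/-- The theta function satisfies the jet form of the heat identity for `φ_{0,1}²`. -/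
lemma jetG_thk {τ : ℂ} (hτ : 0 < τ.im) (z : ℂ) :
    jetG (Eis2 τ) (Eis4 τ) (Eis6 τ) (fun k => thk k τ z) = 0 := by
  lift τ to ℍ using hτ
  have h1 : jetG (algebraMap ℂ entireAlg (Eis2 τ)) (algebraMap ℂ entireAlg (Eis4 τ))
      (algebraMap ℂ entireAlg (Eis6 τ)) (thEnt τ) = 0 := by
    apply taylorHom_injective
    rw [map_jetG, map_zero]
    have := congrArg (PowerSeries.map (evalH τ)) thser_jets_eq_zero.2
    rw [map_jetG, map_zero, PowerSeries.map_C, PowerSeries.map_C, PowerSeries.map_C] at this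
    simp only [taylorHom_algebraMap, taylorHom_thEnt]
    exact this
  have h2 := congrArg ((Pi.evalRingHom (fun _ : ℂ => ℂ) (2 * π * I * z)).comp
    entireAlg.val.toRingHom) h1
  rw [map_jetG, map_zero] at h2
  rw [show (fun k => thk k τ z) = fun k => thk 1 τ 0 * (thEnt τ k).1 (2 * π * I * z) from
    funext fun k => (thEnt_apply τ k z).symm, jetG_smul, mul_eq_zero]
  exact .inr h2

/-! ### The heat operator on `φ_{-2,1}²`, `φ_{-2,1} φ_{0,1}` and `φ_{0,1}²` -/

lemma phim21_eq (τ z : ℂ) : phim21 τ z = thk 0 τ z ^ 2 / etaD τ ^ 6 := by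
  rw [phim21, thetaJ_eq_thk]

lemma phi01_eq {τ : ℂ} (hτ : 0 < τ.im) (z : ℂ) :
    phi01 τ z = jetB (Eis2 τ) (fun k => thk k τ z) / etaD τ ^ 6 := by
  have h0 : thetaJ τ = fun z => thk 0 τ z := funext fun z => thetaJ_eq_thk τ z
  have h1 : deriv (thetaJ τ) = fun z => 2 * π * I * thk 1 τ z := by
    rw [h0]
    exact funext fun z => (hasDerivAt_thk_z 0 hτ z).deriv
  have h2 : deriv (deriv (thetaJ τ)) z = 2 * π * I * (2 * π * I * thk 2 τ z) := by
    rw [h1]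
    exact ((hasDerivAt_thk_z 1 hτ z).const_mul _).deriv
  have hpi : (π : ℂ) ≠ 0 := by exact_mod_cast Real.pi_ne_zero
  have := etaD_ne_zero hτ
  rw [phi01, h2, h1, h0, jetB]
  field_simp
  ring_nf
  simp only [Complex.I_sq]
  ring

lemma hasDerivAt_inv_etaD {τ : ℂ} (hτ : 0 < τ.im) :
    HasDerivAt (fun t => (etaD t ^ 6)⁻¹) (2 * π * I * (-(Eis2 τ / 4) * (etaD τ ^ 6)⁻¹)) τ := by
  have h := etaD_ne_zero hτ
  refine (((hasDerivAt_etaD hτ).pow 6).inv (pow_ne_zero 6 h)).congr_deriv ?_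
  simp only [Pi.pow_apply]
  field_simp
  norm_num
  ring

lemma hasDerivAt_phim21_tau {τ : ℂ} (hτ : 0 < τ.im) (z : ℂ) :
    HasDerivAt (fun t => phim21 t z) (2 * π * I *
      ((thk 0 τ z * thk 2 τ z - Eis2 τ / 4 * thk 0 τ z ^ 2) * (etaD τ ^ 6)⁻¹)) τ := by
  simp only [phim21_eq, div_eq_mul_inv]
  refine (((hasDerivAt_thk_tau 0 hτ z).pow 2).mul (hasDerivAt_inv_etaD hτ)).congr_deriv ?_
  simp only [Pi.pow_apply]
  push_cast
  ring

lemma hasDerivAt_Eis2 {τ : ℂ} (hτ : 0 < τ.im) :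
    HasDerivAt Eis2 (2 * π * I * ((Eis2 τ ^ 2 - Eis4 τ) / 12)) τ :=
  deriv_Eis2 hτ ▸ (differentiableAt_Eis2 hτ).hasDerivAt

lemma hasDerivAt_Eis4 {τ : ℂ} (hτ : 0 < τ.im) :
    HasDerivAt Eis4 (2 * π * I * ((Eis2 τ * Eis4 τ - Eis6 τ) / 3)) τ :=
  deriv_Eis4 hτ ▸ (differentiableAt_Eis4 hτ).hasDerivAt

lemma hasDerivAt_Eis6 {τ : ℂ} (hτ : 0 < τ.im) :
    HasDerivAt Eis6 (2 * π * I * ((Eis2 τ * Eis6 τ - Eis4 τ ^ 2) / 2)) τ :=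
  deriv_Eis6 hτ ▸ (differentiableAt_Eis6 hτ).hasDerivAt

lemma hasDerivAt_phi01_tau {τ : ℂ} (hτ : 0 < τ.im) (z : ℂ) :
    HasDerivAt (fun t => phi01 t z) (2 * π * I *
      (((Eis2 τ ^ 2 - Eis4 τ) / 12 * thk 0 τ z ^ 2 + Eis2 τ * thk 0 τ z * thk 2 τ z
        - 6 * (thk 2 τ z ^ 2 + thk 0 τ z * thk 4 τ z - 2 * thk 1 τ z * thk 3 τ z)
        - Eis2 τ / 4 * jetB (Eis2 τ) (fun k => thk k τ z)) * (etaD τ ^ 6)⁻¹)) τ := by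
  have hev : (fun t => phi01 t z) =ᶠ[𝓝 τ] fun t =>
      (Eis2 t * thk 0 t z ^ 2 - 12 * (thk 0 t z * thk 2 t z - thk 1 t z ^ 2))
        * (etaD t ^ 6)⁻¹ := by
    filter_upwards [isOpen_upperHalfPlaneSet.mem_nhds hτ] with w hw
    rw [phi01_eq hw, jetB, div_eq_mul_inv]
  refine HasDerivAt.congr_of_eventuallyEq ?_ hev
  have h0 := hasDerivAt_thk_tau 0 hτ z
  have h1 := hasDerivAt_thk_tau 1 hτ z
  have h2 := hasDerivAt_thk_tau 2 hτ z
  refine (((((hasDerivAt_Eis2 hτ).mul (h0.pow 2)).sub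
    (((h0.mul h2).sub (h1.pow 2)).const_mul 12))).mul (hasDerivAt_inv_etaD hτ)).congr_deriv ?_
  simp only [Pi.pow_apply, Pi.mul_apply, Pi.sub_apply, jetB]
  push_cast
  ring

lemma hasDerivAt_phim21_z {τ : ℂ} (hτ : 0 < τ.im) (z : ℂ) :
    HasDerivAt (fun z => phim21 τ z)
      (2 * π * I * (2 * thk 0 τ z * thk 1 τ z * (etaD τ ^ 6)⁻¹)) z := by
  simp only [phim21_eq, div_eq_mul_inv]
  refine (((hasDerivAt_thk_z 0 hτ z).pow 2).mul_const _).congr_deriv ?_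
  push_cast
  ring

lemma hasDerivAt_phim21_zz {τ : ℂ} (hτ : 0 < τ.im) (z : ℂ) :
    HasDerivAt (fun z => 2 * thk 0 τ z * thk 1 τ z * (etaD τ ^ 6)⁻¹)
      (2 * π * I * (2 * (thk 1 τ z ^ 2 + thk 0 τ z * thk 2 τ z) * (etaD τ ^ 6)⁻¹)) z := by
  refine ((((hasDerivAt_thk_z 0 hτ z).const_mul 2).mul
    (hasDerivAt_thk_z 1 hτ z)).mul_const _).congr_deriv ?_
  push_cast
  ring

lemma hasDerivAt_phi01_z {τ : ℂ} (hτ : 0 < τ.im) (z : ℂ) :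
    HasDerivAt (fun z => phi01 τ z)
      (2 * π * I * (jetB1 (Eis2 τ) (fun k => thk k τ z) * (etaD τ ^ 6)⁻¹)) z := by
  simp only [phi01_eq hτ, div_eq_mul_inv, jetB, jetB1]
  have h0 := hasDerivAt_thk_z 0 hτ z
  have h1 := hasDerivAt_thk_z 1 hτ z
  have h2 := hasDerivAt_thk_z 2 hτ z
  refine (((((h0.pow 2).const_mul (Eis2 τ)).sub
    (((h0.mul h2).sub (h1.pow 2)).const_mul 12))).mul_const _).congr_deriv ?_
  push_cast
  ring

lemma hasDerivAt_phi01_zz {τ : ℂ} (hτ : 0 < τ.im) (z : ℂ) :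
    HasDerivAt (fun z => jetB1 (Eis2 τ) (fun k => thk k τ z) * (etaD τ ^ 6)⁻¹)
      (2 * π * I * (jetB2 (Eis2 τ) (fun k => thk k τ z) * (etaD τ ^ 6)⁻¹)) z := by
  simp only [jetB1, jetB2]
  have h0 := hasDerivAt_thk_z 0 hτ z
  have h1 := hasDerivAt_thk_z 1 hτ z
  have h2 := hasDerivAt_thk_z 2 hτ z
  have h3 := hasDerivAt_thk_z 3 hτ z
  refine ((((h0.const_mul (2 * Eis2 τ)).mul h1).sub
    (((h0.mul h3).sub (h1.mul h2)).const_mul 12)).mul_const _).congr_deriv ?_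
  ring

/-- The index two heat operator preserves the span of `φ_{-2,1}²`, `φ_{-2,1} φ_{0,1}`, `φ_{0,1}²`
over quasimodular forms. The coefficients `α`, `β`, `γ` have `q d/dq`-derivatives `α'`, `β'`,
`γ'` at `τ`. -/
lemma heatOp_comb {φ : ℂ → ℂ → ℂ} {α β γ : ℂ → ℂ} {α' β' γ' τ : ℂ} (hτ : 0 < τ.im)
    (hφ : ∀ t z, 0 < t.im → φ t z = α t * phim21 t z ^ 2 + β t * (phim21 t z * phi01 t z)
      + γ t * phi01 t z ^ 2)
    (hα : HasDerivAt α (2 * π * I * α') τ) (hβ : HasDerivAt β (2 * π * I * β') τ)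
    (hγ : HasDerivAt γ (2 * π * I * γ') τ) (z : ℂ) :
    heatOp 2 φ τ z =
      (12 * α' - 9 / 2 * Eis2 τ * α τ - 13 / 4 * Eis4 τ * β τ - 2 * Eis6 τ * γ τ)
        * phim21 τ z ^ 2
      + (12 * β' - 3 / 2 * α τ - 5 / 2 * Eis2 τ * β τ - 7 / 2 * Eis4 τ * γ τ)
        * (phim21 τ z * phi01 τ z)
      + (12 * γ' - 1 / 4 * β τ - 1 / 2 * Eis2 τ * γ τ) * phi01 τ z ^ 2 := by
  have hpi : (π : ℂ) ≠ 0 := by exact_mod_cast Real.pi_ne_zero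
  have hev : (fun t => φ t z) =ᶠ[𝓝 τ] fun t => α t * phim21 t z ^ 2
      + β t * (phim21 t z * phi01 t z) + γ t * phi01 t z ^ 2 := by
    filter_upwards [isOpen_upperHalfPlaneSet.mem_nhds hτ] with w hw using hφ w z hw
  have ha := hasDerivAt_phim21_tau hτ z
  have hb := hasDerivAt_phi01_tau hτ z
  set ad : ℂ := (thk 0 τ z * thk 2 τ z - Eis2 τ / 4 * thk 0 τ z ^ 2) * (etaD τ ^ 6)⁻¹ with had
  set bd : ℂ := ((Eis2 τ ^ 2 - Eis4 τ) / 12 * thk 0 τ z ^ 2 + Eis2 τ * thk 0 τ z * thk 2 τ z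
        - 6 * (thk 2 τ z ^ 2 + thk 0 τ z * thk 4 τ z - 2 * thk 1 τ z * thk 3 τ z)
        - Eis2 τ / 4 * jetB (Eis2 τ) (fun k => thk k τ z)) * (etaD τ ^ 6)⁻¹ with hbd
  have hD : deriv (fun t => φ t z) τ = 2 * π * I *
      (α' * phim21 τ z ^ 2 + α τ * (2 * phim21 τ z * ad) + β' * (phim21 τ z * phi01 τ z)
        + β τ * (ad * phi01 τ z + phim21 τ z * bd) + γ' * phi01 τ z ^ 2
        + γ τ * (2 * phi01 τ z * bd)) := by
    refine HasDerivAt.deriv (((((hα.mul (ha.pow 2)).add (hβ.mul (ha.mul hb))).add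
      (hγ.mul (hb.pow 2))).congr_of_eventuallyEq hev).congr_deriv ?_)
    simp only [Pi.pow_apply, Pi.mul_apply]
    push_cast
    ring
  have hz : φ τ = fun z => α τ * phim21 τ z ^ 2 + β τ * (phim21 τ z * phi01 τ z)
      + γ τ * phi01 τ z ^ 2 := funext fun z => hφ τ z hτ
  set a1 : ℂ → ℂ := fun z => 2 * thk 0 τ z * thk 1 τ z * (etaD τ ^ 6)⁻¹ with ha1
  set b1 : ℂ → ℂ := fun z => jetB1 (Eis2 τ) (fun k => thk k τ z) * (etaD τ ^ 6)⁻¹ with hb1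
  have hz1 : deriv (φ τ) = fun z => 2 * π * I * (α τ * (2 * phim21 τ z * a1 z)
      + β τ * (a1 z * phi01 τ z + phim21 τ z * b1 z) + γ τ * (2 * phi01 τ z * b1 z)) := by
    rw [hz]
    funext z
    have ha := hasDerivAt_phim21_z hτ z
    have hb := hasDerivAt_phi01_z hτ z
    refine HasDerivAt.deriv (((((ha.pow 2).const_mul (α τ)).add
      ((ha.mul hb).const_mul (β τ))).add ((hb.pow 2).const_mul (γ τ))).congr_deriv ?_)
    push_cast
    simp only [ha1, hb1]
    ring
  have hza : HasDerivAt (fun z => phim21 τ z) (2 * π * I * a1 z) z := hasDerivAt_phim21_z hτ z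
  have hzb : HasDerivAt (fun z => phi01 τ z) (2 * π * I * b1 z) z := hasDerivAt_phi01_z hτ z
  set a2 : ℂ := 2 * (thk 1 τ z ^ 2 + thk 0 τ z * thk 2 τ z) * (etaD τ ^ 6)⁻¹ with ha2
  set b2 : ℂ := jetB2 (Eis2 τ) (fun k => thk k τ z) * (etaD τ ^ 6)⁻¹ with hb2
  have hza1 : HasDerivAt a1 (2 * π * I * a2) z := hasDerivAt_phim21_zz hτ z
  have hzb1 : HasDerivAt b1 (2 * π * I * b2) z := hasDerivAt_phi01_zz hτ z
  have hZ : deriv (deriv (φ τ)) z = 2 * π * I * (2 * π * I *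
      (α τ * (2 * a1 z ^ 2 + 2 * phim21 τ z * a2)
        + β τ * (a2 * phi01 τ z + 2 * a1 z * b1 z + phim21 τ z * b2)
        + γ τ * (2 * b1 z ^ 2 + 2 * phi01 τ z * b2))) := by
    rw [hz1]
    refine HasDerivAt.deriv (((((((hza.const_mul 2).mul hza1).const_mul (α τ)).add
      (((hza1.mul hzb).add (hza.mul hzb1)).const_mul (β τ))).add
      (((hzb.const_mul 2).mul hzb1).const_mul (γ τ))).const_mul (2 * π * I)).congr_deriv ?_)
    ring
  have hQ := jetQ_thk hτ z
  have hG := jetG_thk hτ z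
  have e1 : ∀ x : ℂ, 12 / (2 * π * I) * (2 * π * I * x) = 12 * x := fun x => by
    have := Complex.two_pi_I_ne_zero
    field_simp
  have e2 : ∀ x : ℂ, 3 / (4 * (π : ℂ) ^ 2 * ((2 : ℚ) : ℂ)) * (2 * π * I * (2 * π * I * x))
      = -3 / 2 * x := fun x => by
    push_cast
    field_simp
    linear_combination (4 * x) * Complex.I_sq
  rw [heatOp, hD, hZ, e1, e2]
  simp only [had, hbd, ha1, hb1, ha2, hb2, phi01_eq hτ, phim21_eq, div_eq_mul_inv _ (etaD τ ^ 6)]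
  generalize (etaD τ ^ 6)⁻¹ = u
  simp only [jetQ, jetG, jetC1, jetC, jetB2, jetB1, jetB] at hQ hG ⊢
  linear_combination (9 / 4 * β τ * u ^ 2) * hQ + (1 / 2 * γ τ * u ^ 2) * hG

lemma heatMod_comb {φ : ℂ → ℂ → ℂ} {α β γ α₁ β₁ γ₁ : ℂ → ℂ} (k : ℚ)
    (hφ : ∀ t z, 0 < t.im → φ t z = α t * phim21 t z ^ 2 + β t * (phim21 t z * phi01 t z)
      + γ t * phi01 t z ^ 2)
    (hα : ∀ τ : ℂ, 0 < τ.im → HasDerivAt α (2 * π * I * α₁ τ) τ)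
    (hβ : ∀ τ : ℂ, 0 < τ.im → HasDerivAt β (2 * π * I * β₁ τ) τ)
    (hγ : ∀ τ : ℂ, 0 < τ.im → HasDerivAt γ (2 * π * I * γ₁ τ) τ) (τ z : ℂ) (hτ : 0 < τ.im) :
    heatMod 2 k φ τ z =
      (12 * α₁ τ - (k + 4) * Eis2 τ * α τ - 13 / 4 * Eis4 τ * β τ - 2 * Eis6 τ * γ τ)
        * phim21 τ z ^ 2
      + (12 * β₁ τ - 3 / 2 * α τ - (k + 2) * Eis2 τ * β τ - 7 / 2 * Eis4 τ * γ τ)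
        * (phim21 τ z * phi01 τ z)
      + (12 * γ₁ τ - 1 / 4 * β τ - k * Eis2 τ * γ τ) * phi01 τ z ^ 2 := by
  rw [heatMod, heatOp_comb hτ hφ (hα τ hτ) (hβ τ hτ) (hγ τ hτ) z, hφ τ z hτ]
  ring

lemma rho02_eq (τ z : ℂ) : rho02 τ z = 17 / 8 * Eis4 τ * phim21 τ z ^ 2
    + 0 * (phim21 τ z * phi01 τ z) + -1 / 8 * phi01 τ z ^ 2 := by
  rw [rho02, psi02, phi02]
  ring

lemma heatMod_rho02 (τ z : ℂ) (hτ : 0 < τ.im) : heatMod 2 0 rho02 τ z =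
    -33 / 4 * Eis6 τ * phim21 τ z ^ 2 + -11 / 4 * Eis4 τ * (phim21 τ z * phi01 τ z)
      + 0 * phi01 τ z ^ 2 := by
  rw [heatMod_comb 0 (fun t z _ => rho02_eq t z)
    (fun τ hτ => ((hasDerivAt_Eis4 hτ).const_mul (17 / 8)).congr_deriv (mul_left_comm _ _ _))
    (fun τ _ => (hasDerivAt_const τ (0 : ℂ)).congr_deriv (mul_zero _).symm)
    (fun τ _ => (hasDerivAt_const τ (-1 / 8 : ℂ)).congr_deriv (mul_zero _).symm) τ z hτ]
  push_cast
  ring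

lemma heatMod_heatMod_rho02 (τ z : ℂ) (hτ : 0 < τ.im) :
    heatMod 2 2 (heatMod 2 0 rho02) τ z =
      935 / 16 * Eis4 τ ^ 2 * phim21 τ z ^ 2 + 187 / 8 * Eis6 τ * (phim21 τ z * phi01 τ z)
        + 11 / 16 * Eis4 τ * phi01 τ z ^ 2 := by
  rw [heatMod_comb 2 heatMod_rho02
    (fun τ hτ => ((hasDerivAt_Eis6 hτ).const_mul (-33 / 4)).congr_deriv (mul_left_comm _ _ _))
    (fun τ hτ => ((hasDerivAt_Eis4 hτ).const_mul (-11 / 4)).congr_deriv (mul_left_comm _ _ _))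
    (fun τ _ => (hasDerivAt_const τ (0 : ℂ)).congr_deriv (mul_zero _).symm) τ z hτ]
  push_cast
  ring

/-- degree-3 modular differential equation for `ρ_{0,2}`:
`H^{(2)}_{4}H^{(2)}_{2}H^{(2)}_{0}(ρ_{0,2}) − (335/4)·E₄·H^{(2)}_{0}(ρ_{0,2}) − (275/4)·E₆·ρ_{0,2} = 0`. -/
theorem statement16 (τ z : ℂ) (hτ : 0 < τ.im) :
    heatMod 2 4 (heatMod 2 2 (heatMod 2 0 rho02)) τ z
      - (335/4) * Eis4 τ * heatMod 2 0 rho02 τ z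
      - (275/4) * Eis6 τ * rho02 τ z = 0 := by
  rw [heatMod_comb 4 heatMod_heatMod_rho02
    (fun τ hτ => (((hasDerivAt_Eis4 hτ).pow 2).const_mul (935 / 16)).congr_deriv
      (show _ = 2 * π * I * (935 / 16 * (2 * Eis4 τ * ((Eis2 τ * Eis4 τ - Eis6 τ) / 3))) by
        push_cast; ring))
    (fun τ hτ => ((hasDerivAt_Eis6 hτ).const_mul (187 / 8)).congr_deriv (mul_left_comm _ _ _))
    (fun τ hτ => ((hasDerivAt_Eis4 hτ).const_mul (11 / 16)).congr_deriv (mul_left_comm _ _ _))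
    τ z hτ, heatMod_rho02 τ z hτ, rho02_eq]
  push_cast
  ring
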